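/- arXiv:1603.08715 — 6 statements merged into one kernel-verified Lean document; each statement's English description precedes it below -/
import Mathlib

section
/- For all d, n, k ≥ 1, the group OB(ℤ^d,n,k) of oblivious Turing machines is amenable. -/
open Function

/-- `ℤ^d`. -/
abbrev V (d : ℕ) : Type := Fin d → ℤ

/-- A head configuration is valid if it carries at most one head. -/
def headOk {d k : ℕ} (y : V d → Option (Fin k)) : Prop :=
  ∀ u v : V d, (y u).isSome → (y v).isSome → u = v

/-- The space `X_{n,k}`: a tape in `Σ^{ℤ^d}` together with at most one head
carrying a state in `Q = Fin k`. -/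
abbrev X (d n k : ℕ) : Type :=
  { c : (V d → Fin n) × (V d → Option (Fin k)) // headOk c.2 }

/-- `DefinedBy F F' f T` : `T` is the moving-head Turing machine defined by the
local rule `f`, reading the tape on the window `F`, writing on the window `F'`,
changing the state and moving the head. -/
def DefinedBy {d n k : ℕ} (F F' : Finset (V d))
    (f : (V d → Fin n) → Fin k → (V d → Fin n) × Fin k × V d)
    (T : X d n k → X d n k) : Prop :=
  -- `f` only depends on the restriction of the tape to `F`, and only the
  -- restriction of its tape output to `F'` matters:
  (∀ x x' q, (∀ v ∈ F, x v = x' v) →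
      (∀ v ∈ F', (f x q).1 v = (f x' q).1 v) ∧ (f x q).2 = (f x' q).2) ∧
  -- a configuration with no head is fixed:
  (∀ c : X d n k, (∀ v, c.val.2 v = none) → T c = c) ∧
  -- if the head is at `v` in state `q`, apply the local rule there:
  (∀ (c : X d n k) (v : V d) (q : Fin k), c.val.2 v = some q →
    (∀ t, (T c).val.1 t =
      if t - v ∈ F' then (f (fun u => c.val.1 (u + v)) q).1 (t - v) else c.val.1 t) ∧
    (∀ t, (T c).val.2 t =
      if t = v + (f (fun u => c.val.1 (u + v)) q).2.2
      then some (f (fun u => c.val.1 (u + v)) q).2.1 else none))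

/-- A moving-head `(d,n,k)`-Turing machine. -/
def IsTM {d n k : ℕ} (T : X d n k → X d n k) : Prop :=
  ∃ F F' f, DefinedBy F F' f T

/-- A reversible moving-head Turing machine: a Turing machine admitting a
Turing machine inverse. -/
def IsRTM {d n k : ℕ} (T : X d n k → X d n k) : Prop :=
  IsTM T ∧ ∃ S : X d n k → X d n k, IsTM S ∧ S ∘ T = id ∧ T ∘ S = id

/-- The set of reversible Turing machines, viewed as permutations of `X_{n,k}`. -/
def RTMset (d n k : ℕ) : Set (Equiv.Perm (X d n k)) :=
  {π | IsTM (⇑π) ∧ IsTM (⇑π.symm)}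

/-- The group `RTM(ℤ^d,n,k)` of reversible Turing machines (a subgroup of the
permutation group of `X_{n,k}`; the set of reversible Turing machines is closed
under composition and inversion, so it coincides with the subgroup it generates). -/
def RTMgrp (d n k : ℕ) : Subgroup (Equiv.Perm (X d n k)) :=
  Subgroup.closure (RTMset d n k)

/-- Local permutations: reversible Turing machines that never move the head. -/
def LPset (d n k : ℕ) : Set (Equiv.Perm (X d n k)) :=
  {π | π ∈ RTMset d n k ∧
    ∀ (c : X d n k) (v : V d), ((π c).val.2 v).isSome = (c.val.2 v).isSome}

/-- The group `LP(ℤ^d,n,k)` of local permutations. -/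
def LPgrp (d n k : ℕ) : Subgroup (Equiv.Perm (X d n k)) :=
  Subgroup.closure (LPset d n k)

/-- Reversible finite-state automata: reversible Turing machines that never
change the tape. -/
def RFAset (d n k : ℕ) : Set (Equiv.Perm (X d n k)) :=
  {π | π ∈ RTMset d n k ∧ ∀ c : X d n k, (π c).val.1 = c.val.1}

/-- The group `RFA(ℤ^d,n,k)` of reversible finite-state automata. -/
def RFAgrp (d n k : ℕ) : Subgroup (Equiv.Perm (X d n k)) :=
  Subgroup.closure (RFAset d n k)

/-- State-permutations: reversible machines that never move the head and never
change the tape, only permuting the state as a function of the tape. -/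
def SPset (d n k : ℕ) : Set (Equiv.Perm (X d n k)) :=
  {π | π ∈ RTMset d n k ∧ (∀ c : X d n k, (π c).val.1 = c.val.1) ∧
    ∀ (c : X d n k) (v : V d), ((π c).val.2 v).isSome = (c.val.2 v).isSome}

/-- The group `SP(ℤ^d,n,k)` of state-permutations. -/
def SPgrp (d n k : ℕ) : Subgroup (Equiv.Perm (X d n k)) :=
  Subgroup.closure (SPset d n k)

/-- The machines `T_u` that move the head by `u ∈ ℤ^d` without changing the
tape or the state. -/
def Shiftset (d n k : ℕ) : Set (Equiv.Perm (X d n k)) :=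
  {π | ∃ u : V d, ∀ c : X d n k,
    (π c).val.1 = c.val.1 ∧ ∀ t, (π c).val.2 t = c.val.2 (t - u)}

/-- The group `Shift(ℤ^d,n,k)`. -/
def Shiftgrp (d n k : ℕ) : Subgroup (Equiv.Perm (X d n k)) :=
  Subgroup.closure (Shiftset d n k)

/-- The group `OB(ℤ^d,n,k) = ⟨Shift(ℤ^d,n,k), LP(ℤ^d,n,k)⟩` of oblivious Turing
machines. -/
def OBgrp (d n k : ℕ) : Subgroup (Equiv.Perm (X d n k)) :=
  Subgroup.closure (Shiftset d n k ∪ LPset d n k)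

/-- The group `EL(ℤ^d,n,k) = ⟨RFA(ℤ^d,n,k), LP(ℤ^d,n,k)⟩` of elementary Turing
machines. -/
def ELgrp (d n k : ℕ) : Subgroup (Equiv.Perm (X d n k)) :=
  Subgroup.closure (RFAset d n k ∪ LPset d n k)

/-- A group is amenable if it carries a finitely additive, left-translation-invariant
probability measure defined on all subsets. -/
def IsAmenable (G : Type*) [Group G] : Prop :=
  ∃ m : Set G → ℝ,
    (∀ A : Set G, 0 ≤ m A) ∧
    m Set.univ = 1 ∧
    (∀ A B : Set G, Disjoint A B → m (A ∪ B) = m A + m B) ∧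
    (∀ (g : G) (A : Set G), m ((g * ·) '' A) = m A)

namespace OBA

open Filter Topology

def Loc {d n k : ℕ} (F : Finset (V d)) (π : Equiv.Perm (X d n k)) : Prop :=
  (∀ c : X d n k, (∀ v, c.val.2 v = none) → π c = c) ∧
  (∀ (c : X d n k) (v : V d), ((π c).val.2 v).isSome = (c.val.2 v).isSome) ∧
  (∀ (c : X d n k) (v : V d) (q : Fin k), c.val.2 v = some q →
    ∀ t, t - v ∉ F → (π c).val.1 t = c.val.1 t) ∧
  (∀ (c c' : X d n k) (v v' : V d) (q : Fin k), c.val.2 v = some q → c'.val.2 v' = some q →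
    (∀ u ∈ F, c.val.1 (u + v) = c'.val.1 (u + v')) →
    (π c).val.2 v = (π c').val.2 v' ∧
      ∀ u ∈ F, (π c).val.1 (u + v) = (π c').val.1 (u + v'))

lemma Loc.one {d n k : ℕ} (F : Finset (V d)) : Loc F (1 : Equiv.Perm (X d n k)) := by
  refine ⟨fun _ _ => rfl, fun _ _ => rfl, fun _ _ _ _ _ _ => rfl, ?_⟩
  intro c c' v v' q h h' hu
  exact ⟨by simp [h, h'], fun u hF => by simpa using hu u hF⟩

lemma Loc.mul {d n k : ℕ} {F : Finset (V d)} {π ρ : Equiv.Perm (X d n k)}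
    (hπ : Loc F π) (hρ : Loc F ρ) : Loc F (π * ρ) := by
  obtain ⟨a1, a2, a3, a4⟩ := hπ
  obtain ⟨b1, b2, b3, b4⟩ := hρ
  have key : ∀ (c : X d n k) v q, c.val.2 v = some q → ∃ q', (ρ c).val.2 v = some q' := by
    intro c v q h
    have := b2 c v
    rw [h] at this
    exact Option.isSome_iff_exists.1 (by simpa using this)
  refine ⟨?_, ?_, ?_, ?_⟩
  · intro c h
    rw [Equiv.Perm.mul_apply, b1 c h, a1 c h]
  · intro c v
    rw [Equiv.Perm.mul_apply, a2, b2]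
  · intro c v q h t ht
    obtain ⟨q', hq'⟩ := key c v q h
    rw [Equiv.Perm.mul_apply, a3 _ v q' hq' t ht, b3 c v q h t ht]
  · intro c c' v v' q h h' hu
    obtain ⟨q', hq'⟩ := key c v q h
    obtain ⟨e1, e2⟩ := b4 c c' v v' q h h' hu
    rw [Equiv.Perm.mul_apply, Equiv.Perm.mul_apply]
    exact a4 _ _ v v' q' hq' (e1 ▸ hq') e2

lemma Loc.mono {d n k : ℕ} {F F' : Finset (V d)} (hF : F ⊆ F') {π : Equiv.Perm (X d n k)}
    (hπ : Loc F π) : Loc F' π := by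
  obtain ⟨a1, a2, a3, a4⟩ := hπ
  refine ⟨a1, a2, fun c v q h t ht => a3 c v q h t (fun h' => ht (hF h')), ?_⟩
  intro c c' v v' q h h' hu
  obtain ⟨e1, e2⟩ := a4 c c' v v' q h h' (fun u hu' => hu u (hF hu'))
  refine ⟨e1, fun u hu' => ?_⟩
  by_cases hm : u ∈ F
  · exact e2 u hm
  · rw [a3 c v q h _ (by simpa using hm), a3 c' v' q h' _ (by simpa using hm)]
    exact hu u hu'

def LG (d n k : ℕ) (F : Finset (V d)) : Subgroup (Equiv.Perm (X d n k)) where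
  carrier := {π | Loc F π ∧ Loc F π⁻¹}
  one_mem' := ⟨Loc.one F, by rw [inv_one]; exact Loc.one F⟩
  mul_mem' := fun {a b} ha hb => ⟨ha.1.mul hb.1, by rw [mul_inv_rev]; exact hb.2.mul ha.2⟩
  inv_mem' := fun {a} ha => ⟨ha.2, by rw [inv_inv]; exact ha.1⟩

lemma LG_mono {d n k : ℕ} {F F' : Finset (V d)} (hF : F ⊆ F') : LG d n k F ≤ LG d n k F' :=
  fun _ h => ⟨h.1.mono hF, h.2.mono hF⟩

open Classical in
noncomputable def canon {d n k : ℕ} (hn : 1 ≤ n) (F : Finset (V d)) (p : F → Fin n) (q : Fin k) :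
    X d n k :=
  ⟨(fun v => if h : v ∈ F then p ⟨v, h⟩ else ⟨0, hn⟩, fun v => if v = 0 then some q else none), by
    intro u v hu hv
    by_cases h1 : u = 0 <;> by_cases h2 : v = 0 <;> simp_all⟩

lemma LG_finite {d n k : ℕ} (hn : 1 ≤ n) (F : Finset (V d)) : Finite (LG d n k F) := by
  classical
  let Φ : LG d n k F → ((F → Fin n) × Fin k → (F → Fin n) × Option (Fin k)) := fun π pq =>
    (fun u => (π.1 (canon hn F pq.1 pq.2)).val.1 u.1, (π.1 (canon hn F pq.1 pq.2)).val.2 0)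
  apply Finite.of_injective Φ
  intro π ρ h
  obtain ⟨π, ⟨a1, a2, a3, a4⟩, _⟩ := π
  obtain ⟨ρ, ⟨b1, b2, b3, b4⟩, _⟩ := ρ
  apply Subtype.ext
  apply Equiv.ext
  intro c
  show π c = ρ c
  by_cases hc : ∀ v, c.val.2 v = none
  · rw [a1 c hc, b1 c hc]
  · push Not at hc
    obtain ⟨v, hv⟩ := hc
    obtain ⟨q, hq⟩ := Option.ne_none_iff_exists'.1 hv
    have hΦ := congrFun h (fun u => c.val.1 (u.1 + v), q)
    simp only [Φ, Prod.mk.injEq] at hΦ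
    set c0 : X d n k := canon hn F (fun u => c.val.1 (u.1 + v)) q with hc0
    have h0 : c0.val.2 0 = some q := by simp [hc0, canon]
    have ht : ∀ u ∈ F, c.val.1 (u + v) = c0.val.1 (u + 0) := by
      intro u hu
      simp [hc0, canon, hu]
    obtain ⟨e1, e2⟩ := a4 c c0 v 0 q hq h0 ht
    obtain ⟨f1, f2⟩ := b4 c c0 v 0 q hq h0 ht
    apply Subtype.ext
    apply Prod.ext
    · funext t
      by_cases hm : t - v ∈ F
      · have g1 := e2 _ hm
        have g2 := f2 _ hm
        have g3 := congrFun hΦ.1 ⟨t - v, hm⟩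
        simp only [sub_add_cancel, add_zero] at g1 g2 g3
        rw [g1, g2, g3]
      · rw [a3 c v q hq t hm, b3 c v q hq t hm]
    · funext t
      by_cases htv : t = v
      · subst htv
        rw [e1, f1]
        exact hΦ.2
      · have hnone : c.val.2 t = none := by
          by_contra hne
          exact htv (c.prop t v (Option.isSome_iff_ne_none.2 hne) (by simp [hq]))
        have g1 := a2 c t
        have g2 := b2 c t
        simp only [hnone, Option.isSome_none, Option.isSome_eq_false_iff, Option.isNone_iff_eq_none] at g1 g2
        rw [g1, g2]

lemma LP_Loc {d n k : ℕ} {π : Equiv.Perm (X d n k)} (h : IsTM ⇑π)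
    (hm : ∀ (c : X d n k) (v : V d), ((π c).val.2 v).isSome = (c.val.2 v).isSome) :
    ∃ F, Loc F π := by
  classical
  obtain ⟨F, F', f, h1, h2, h3⟩ := h
  have mv : ∀ (c : X d n k) v q, c.val.2 v = some q →
      (π c).val.2 v = some (f (fun u => c.val.1 (u + v)) q).2.1 := by
    intro c v q hq
    have e := (h3 c v q hq).2 v
    have e' := hm c v
    rw [e, hq] at e'
    split_ifs at e with hh
    · exact e
    · rw [if_neg hh] at e'
      simp at e'
  refine ⟨F ∪ F', h2, hm, ?_, ?_⟩
  · intro c v q hq t ht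
    rw [(h3 c v q hq).1 t, if_neg]
    intro h'
    exact ht (Finset.mem_union_right _ h')
  · intro c c' v v' q hq hq' hu
    obtain ⟨g1, g2⟩ := h1 (fun u => c.val.1 (u + v)) (fun u => c'.val.1 (u + v')) q
      (fun u hF => hu u (Finset.mem_union_left _ hF))
    refine ⟨by rw [mv c v q hq, mv c' v' q hq', g2], fun u hF => ?_⟩
    rw [(h3 c v q hq).1, (h3 c' v' q hq').1]
    simp only [add_sub_cancel_right]
    by_cases hF' : u ∈ F'
    · rw [if_pos hF', if_pos hF']
      exact g1 u hF'
    · rw [if_neg hF', if_neg hF']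
      exact hu u hF

lemma LP_LG {d n k : ℕ} {π : Equiv.Perm (X d n k)} (h : π ∈ LPset d n k) :
    ∃ F, π ∈ LG d n k F := by
  classical
  obtain ⟨⟨h1, h2⟩, h3⟩ := h
  obtain ⟨F, hF⟩ := LP_Loc h1 h3
  obtain ⟨F', hF'⟩ := LP_Loc (π := π⁻¹) h2 (by
    intro c v
    have := h3 (π⁻¹ c) v
    have e : π (π⁻¹ c) = c := Equiv.apply_symm_apply π c
    rw [e] at this
    exact this.symm)
  exact ⟨F ∪ F', hF.mono Finset.subset_union_left, hF'.mono Finset.subset_union_right⟩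

def shf {d n k : ℕ} (u : V d) (c : X d n k) : X d n k :=
  ⟨(c.val.1, fun t => c.val.2 (t - u)), by
    intro a b ha hb
    exact sub_left_injective (c.prop _ _ ha hb)⟩

def Tm {d n k : ℕ} (u : V d) : Equiv.Perm (X d n k) where
  toFun := shf u
  invFun := shf (-u)
  left_inv := fun c => by apply Subtype.ext; simp [shf]
  right_inv := fun c => by apply Subtype.ext; simp [shf]

lemma Tm_add {d n k : ℕ} (u v : V d) : (Tm (u + v) : Equiv.Perm (X d n k)) = Tm u * Tm v := by
  apply Equiv.ext
  intro c
  apply Subtype.ext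
  apply Prod.ext
  · rfl
  · funext t
    show c.val.2 (t - (u + v)) = c.val.2 (t - u - v)
    rw [sub_sub]

lemma Tm_neg {d n k : ℕ} (u : V d) : (Tm (-u) : Equiv.Perm (X d n k)) = (Tm u)⁻¹ := by
  apply Equiv.ext
  intro c
  rfl

lemma conj_Loc {d n k : ℕ} [DecidableEq (V d)] {F : Finset (V d)} {π : Equiv.Perm (X d n k)}
    (h : Loc F π) (b : V d) : Loc (F.image (· + b)) ((Tm b)⁻¹ * π * Tm b) := by
  obtain ⟨a1, a2, a3, a4⟩ := h
  have s1 : ∀ (c : X d n k), (((Tm b)⁻¹ * π * Tm b : Equiv.Perm (X d n k)) c).val.1 = (π (Tm b c)).val.1 := fun _ => rfl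
  have s2 : ∀ (c : X d n k) t, (((Tm b)⁻¹ * π * Tm b : Equiv.Perm (X d n k)) c).val.2 t = (π (Tm b c)).val.2 (t + b) := by
    intro c t
    show (π (Tm b c)).val.2 (t - -b) = _
    rw [sub_neg_eq_add]
  have s3 : ∀ (c : X d n k) t, (Tm b c).val.2 (t + b) = c.val.2 t := by
    intro c t
    show c.val.2 (t + b - b) = _
    rw [add_sub_cancel_right]
  have s4 : ∀ (c : X d n k), (Tm b c).val.1 = c.val.1 := fun _ => rfl
  refine ⟨?_, ?_, ?_, ?_⟩
  · intro c hc
    rw [Equiv.Perm.mul_apply, Equiv.Perm.mul_apply, a1 (Tm b c) (fun v => hc _)]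
    exact Equiv.symm_apply_apply (Tm b) c
  · intro c v
    rw [s2, a2, s3]
  · intro c v q hq t ht
    rw [s1, a3 (Tm b c) (v + b) q (by rw [s3, hq]) t, s4]
    intro hh
    apply ht
    refine Finset.mem_image.2 ⟨_, hh, ?_⟩
    abel
  · intro c c' v v' q hq hq' hu
    have := a4 (Tm b c) (Tm b c') (v + b) (v' + b) q (by rw [s3, hq]) (by rw [s3, hq']) (by
      intro u hF
      rw [s4, s4]
      have := hu (u + b) (Finset.mem_image_of_mem _ hF)
      rwa [add_assoc, add_assoc, add_comm b, add_comm b] at this)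
    refine ⟨by rw [s2, s2, this.1], ?_⟩
    intro u hF
    obtain ⟨w, hw, rfl⟩ := Finset.mem_image.1 hF
    have := this.2 w hw
    rw [s1, s1]
    show (π (Tm b c)).val.1 (w + b + v) = (π (Tm b c')).val.1 (w + b + v')
    rwa [add_assoc, add_assoc, add_comm b, add_comm b]

lemma conj_LG {d n k : ℕ} (F : Finset (V d)) (b : V d) :
    ∃ F', ∀ p ∈ LG d n k F, (Tm b)⁻¹ * p * Tm b ∈ LG d n k F' := by
  classical
  refine ⟨F.image (· + b), fun p hp => ⟨conj_Loc hp.1 b, ?_⟩⟩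
  have := conj_Loc hp.2 b
  simpa [mul_assoc] using this

lemma Tm_mem {d n k : ℕ} (u : V d) : Tm u ∈ OBgrp d n k :=
  Subgroup.subset_closure (Or.inl ⟨u, fun _ => ⟨rfl, fun _ => rfl⟩⟩)

lemma gen {d n k : ℕ} (g : Equiv.Perm (X d n k)) (hg : g ∈ OBgrp d n k) :
    ∃ u F, ∃ p ∈ LG d n k F, g = Tm u * p := by
  classical
  have hmul : ∀ a b : Equiv.Perm (X d n k), (∃ u F, ∃ p ∈ LG d n k F, a = Tm u * p) →
      (∃ u F, ∃ p ∈ LG d n k F, b = Tm u * p) → ∃ u F, ∃ p ∈ LG d n k F, a * b = Tm u * p := by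
    rintro _ _ ⟨u, F, p, hp, rfl⟩ ⟨v, E, r, hr, rfl⟩
    obtain ⟨F', hF'⟩ := conj_LG (n := n) (k := k) F v
    refine ⟨u + v, F' ∪ E, ((Tm v)⁻¹ * p * Tm v) * r, mul_mem
      (LG_mono Finset.subset_union_left (hF' p hp)) (LG_mono Finset.subset_union_right hr), ?_⟩
    rw [Tm_add]
    group
  have T0 : (Tm 0 : Equiv.Perm (X d n k)) = 1 := by
    have := Tm_add (n := n) (k := k) (0 : V d) 0
    rw [add_zero] at this
    exact left_eq_mul.1 this
  have hL : ∀ F, ∀ p ∈ LG d n k F, ∃ u E, ∃ r ∈ LG d n k E, p = Tm u * r :=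
    fun F p hp => ⟨0, F, p, hp, by rw [T0, one_mul]⟩
  have hT : ∀ v, ∃ u E, ∃ r ∈ LG d n k E, Tm v = Tm u * r :=
    fun v => ⟨v, ∅, 1, one_mem _, by rw [mul_one]⟩
  unfold OBgrp at hg
  induction hg using Subgroup.closure_induction with
  | mem x hx =>
    rcases hx with ⟨u, hu⟩ | hx
    · have : x = Tm u := by
        apply Equiv.ext
        intro c
        apply Subtype.ext
        exact Prod.ext (hu c).1 (funext (hu c).2)
      rw [this]
      exact hT u
    · obtain ⟨F, hF⟩ := LP_LG hx
      exact hL F x hF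
  | one => exact hL ∅ 1 (one_mem _)
  | mul x y _ _ hx hy => exact hmul x y hx hy
  | inv x _ hx =>
    obtain ⟨u, F, p, hp, rfl⟩ := hx
    rw [mul_inv_rev, ← Tm_neg]
    exact hmul _ _ (hL F _ (inv_mem hp)) (hT _)

/-! Boxes -/

noncomputable def Bx (d N : ℕ) : Finset (V d) := Finset.Icc 0 (fun _ => (N : ℤ))

lemma Bx_nonempty (d N : ℕ) : (Bx d N).Nonempty :=
  ⟨0, Finset.mem_Icc.2 ⟨le_rfl, fun _ => by simp⟩⟩

lemma Bx_card (d N : ℕ) : (Bx d N).card = (N + 1) ^ d := by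
  rw [Bx, Pi.card_Icc]
  simp

lemma Bx_folner {d : ℕ} (u : V d) :
    Tendsto (fun N : ℕ => (((Bx d N).filter (fun b => u + b ∈ Bx d N)).card : ℝ) / (Bx d N).card)
      atTop (𝓝 1) := by
  classical
  have hlow : Tendsto (fun N : ℕ => ∏ i : Fin d, (1 - (|u i| : ℝ) / ((N : ℝ) + 1))) atTop (𝓝 1) := by
    have : (1 : ℝ) = ∏ i : Fin d, (1 - 0 : ℝ) := by simp
    suffices goal : Tendsto (fun N : ℕ => ∏ i : Fin d, (1 - (|u i| : ℝ) / ((N : ℝ) + 1))) atTop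
        (𝓝 (∏ i : Fin d, (1 - 0 : ℝ))) by
      rwa [← this] at goal
    apply tendsto_finsetProd
    intro i _
    apply Tendsto.sub tendsto_const_nhds
    have := (tendsto_one_div_add_atTop_nhds_zero_nat (𝕜 := ℝ)).const_mul (|(u i : ℝ)|)
    simpa [div_eq_mul_inv] using this
  refine tendsto_of_tendsto_of_tendsto_of_le_of_le' hlow tendsto_const_nhds ?_ ?_
  · filter_upwards [eventually_ge_atTop (∑ i, (u i).natAbs)] with N hN
    have hNi : ∀ i, |u i| ≤ (N : ℤ) := by
      intro i
      have : (u i).natAbs ≤ ∑ i, (u i).natAbs :=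
        Finset.single_le_sum (f := fun i => (u i).natAbs) (fun _ _ => Nat.zero_le _)
          (Finset.mem_univ i)
      rw [Int.abs_eq_natAbs]
      exact_mod_cast this.trans hN
    have hsub : Finset.Icc (fun i => max 0 (-u i)) (fun i => min (N : ℤ) (N - u i)) ⊆
        (Bx d N).filter (fun b => u + b ∈ Bx d N) := by
      intro b hb
      rw [Finset.mem_Icc] at hb
      simp only [Finset.mem_filter, Bx, Finset.mem_Icc]
      refine ⟨⟨fun i => ?_, fun i => ?_⟩, fun i => ?_, fun i => ?_⟩ <;>
      · have h1 := hb.1 i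
        have h2 := hb.2 i
        simp only [Pi.zero_apply, Pi.add_apply] at *
        omega
    have hc := Finset.card_le_card hsub
    rw [Pi.card_Icc] at hc
    have hc' : ∏ i, ((N : ℝ) + 1 - |(u i : ℝ)|) ≤
        ((Bx d N).filter (fun b => u + b ∈ Bx d N)).card := by
      refine le_trans (le_of_eq ?_) (Nat.cast_le.2 hc)
      push_cast
      apply Finset.prod_congr rfl
      intro i _
      rw [Int.card_Icc]
      have e : (min (N : ℤ) (N - u i) + 1 - max 0 (-u i)) = N + 1 - |u i| := by
        rcases abs_cases (u i) with h | h <;> omega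
      have e2 : (((N : ℤ) + 1 - |u i|).toNat : ℤ) = N + 1 - |u i| :=
        Int.toNat_of_nonneg (by have := hNi i; omega)
      rw [e]
      have e3 : ((((N : ℤ) + 1 - |u i|).toNat : ℤ) : ℝ) = ((N + 1 - |u i| : ℤ) : ℝ) := by rw [e2]
      push_cast at e3
      rw [← e3]
    rw [Bx_card, le_div_iff₀ (by positivity)]
    refine le_trans (le_of_eq ?_) hc'
    have : ((((N + 1) ^ d : ℕ)) : ℝ) = ∏ i : Fin d, ((N : ℝ) + 1) := by simp
    rw [this, ← Finset.prod_mul_distrib]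
    apply Finset.prod_congr rfl
    intro i _
    have : (N : ℝ) + 1 ≠ 0 := by positivity
    field_simp
  · refine Eventually.of_forall fun N => ?_
    apply div_le_one_of_le₀ _ (by positivity)
    exact_mod_cast Finset.card_filter_le _ _

/-- comparison of shifted sums -/
lemma sum_shift {d : ℕ} (B : Finset (V d)) (u : V d) (φ : V d → ℝ) (h0 : ∀ b, 0 ≤ φ b)
    (h1 : ∀ b, φ b ≤ 1) [DecidablePred (fun b => u + b ∈ B)] :
    |∑ b ∈ B, φ (u + b) - ∑ b ∈ B, φ b| ≤ B.card - (B.filter (fun b => u + b ∈ B)).card := by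
  classical
  set C := B.filter (fun b => u + b ∈ B) with hC
  have hCB : C ⊆ B := Finset.filter_subset _ _
  have hinj : Set.InjOn (fun b => u + b) (C : Set (V d)) := fun a _ b _ h => add_left_cancel h
  have hDB : C.image (fun b => u + b) ⊆ B := by
    intro x hx
    obtain ⟨b, hb, rfl⟩ := Finset.mem_image.1 hx
    exact (Finset.mem_filter.1 hb).2
  have e1 := Finset.sum_sdiff (f := fun b => φ (u + b)) hCB
  have e2 := Finset.sum_sdiff (f := φ) hDB
  rw [Finset.sum_image hinj] at e2
  have bd : ∀ (S : Finset (V d)) (ψ : V d → ℝ), (∀ b, 0 ≤ ψ b) → (∀ b, ψ b ≤ 1) →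
      0 ≤ ∑ b ∈ S, ψ b ∧ ∑ b ∈ S, ψ b ≤ S.card := by
    intro S ψ p0 p1
    refine ⟨Finset.sum_nonneg fun b _ => p0 b, ?_⟩
    calc ∑ b ∈ S, ψ b ≤ ∑ b ∈ S, (1 : ℝ) := Finset.sum_le_sum fun b _ => p1 b
      _ = S.card := by simp
  have c1 := bd (B \ C) (fun b => φ (u + b)) (fun b => h0 _) (fun b => h1 _)
  have c2 := bd (B \ C.image (fun b => u + b)) φ h0 h1
  rw [Finset.cast_card_sdiff hCB] at c1
  rw [Finset.cast_card_sdiff hDB, Finset.card_image_of_injOn hinj] at c2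
  rw [abs_le]
  constructor <;> linarith [c1.1, c1.2, c2.1, c2.2]

open Classical in
theorem amen {d : ℕ} {P : Type*} [Group P] (G : Subgroup P) (T : V d → P)
    (hT : ∀ u v, T (u + v) = T u * T v) (hTG : ∀ u, T u ∈ G)
    (L : Finset (V d) → Subgroup P) (hL : ∀ F F', F ⊆ F' → L F ≤ L F')
    (hfin : ∀ F, Finite (L F))
    (hconj : ∀ F b, ∃ F', ∀ p ∈ L F, (T b)⁻¹ * p * T b ∈ L F')
    (hgen : ∀ g ∈ G, ∃ u F, ∃ p ∈ L F, g = T u * p) : IsAmenable G := by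
  choose cF hcF using hconj
  let W : Finset (V d) × ℕ → Finset (V d) := fun i => (Bx d i.2).biUnion (fun b => cF i.1 b)
  let H : Finset (V d) × ℕ → Subgroup P := fun i => L (W i) ⊓ G
  have hHfin : ∀ i, Finite (H i) := fun i => by
    have := hfin (W i)
    exact Set.Finite.subset (s := (L (W i) : Set P)) (Set.toFinite _) (fun x hx => hx.1)
  have hHft : ∀ i, Fintype (H i) := fun i => Fintype.ofFinite _
  have hH : ∀ i, ∀ p ∈ L i.1, p ∈ G → ∀ b ∈ Bx d i.2, (T b)⁻¹ * p * T b ∈ H i := by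
    intro i p hp hpG b hb
    exact ⟨hL _ _ (Finset.subset_biUnion_of_mem (fun b => cF i.1 b) hb) (hcF _ b p hp),
      G.mul_mem (G.mul_mem (G.inv_mem (hTG b)) hpG) (hTG b)⟩
  -- fibre density
  let φ : Finset (V d) × ℕ → Set G → V d → ℝ := fun i S c =>
    (∑ h : H i, if (⟨T c * h.1, mul_mem (hTG c) h.2.2⟩ : G) ∈ S then (1 : ℝ) else 0) /
      Fintype.card (H i)
  have hcard : ∀ i, (0 : ℝ) < Fintype.card (H i) := fun i => by
    exact_mod_cast Fintype.card_pos
  have φ0 : ∀ i S c, 0 ≤ φ i S c := fun i S c => by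
    apply div_nonneg _ (hcard i).le
    exact Finset.sum_nonneg fun _ _ => by split_ifs <;> norm_num
  have φ1 : ∀ i S c, φ i S c ≤ 1 := fun i S c => by
    apply div_le_one_of_le₀ _ (hcard i).le
    calc _ ≤ ∑ h : H i, (1 : ℝ) := Finset.sum_le_sum fun _ _ => by split_ifs <;> norm_num
      _ = _ := by simp
  have φu : ∀ i c, φ i Set.univ c = 1 := fun i c => by
    simp [φ]
  have φa : ∀ i A B c, Disjoint A B → φ i (A ∪ B) c = φ i A c + φ i B c := by
    intro i A B c hAB
    simp only [φ]
    rw [← add_div, ← Finset.sum_add_distrib]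
    congr 1
    apply Finset.sum_congr rfl
    intro h _
    by_cases hA : (⟨T c * h.1, mul_mem (hTG c) h.2.2⟩ : G) ∈ A
    · simp [hA, Set.disjoint_left.1 hAB hA]
    · simp [hA]
  let μ : Finset (V d) × ℕ → Set G → ℝ := fun i S => (∑ b ∈ Bx d i.2, φ i S b) / (Bx d i.2).card
  have hB : ∀ N, (0 : ℝ) < (Bx d N).card := fun N => by
    exact_mod_cast Finset.card_pos.2 (Bx_nonempty d N)
  have μ0 : ∀ i S, 0 ≤ μ i S := fun i S =>
    div_nonneg (Finset.sum_nonneg fun b _ => φ0 i S b) (hB _).le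
  have μ1 : ∀ i S, μ i S ≤ 1 := fun i S => by
    apply div_le_one_of_le₀ _ (hB _).le
    calc _ ≤ ∑ b ∈ Bx d i.2, (1 : ℝ) := Finset.sum_le_sum fun b _ => φ1 i S b
      _ = _ := by simp
  have μu : ∀ i, μ i Set.univ = 1 := fun i => by
    simp only [μ, φu]
    simp [(hB i.2).ne']
  have μa : ∀ i A B, Disjoint A B → μ i (A ∪ B) = μ i A + μ i B := by
    intro i A B hAB
    simp only [μ]
    rw [← add_div, ← Finset.sum_add_distrib]
    congr 1
    exact Finset.sum_congr rfl fun b _ => φa i A B b hAB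
  -- near invariance
  have μinv : ∀ (g : G) (A : Set G),
      Tendsto (fun i => μ i ((g * ·) '' A) - μ i A) atTop (𝓝 0) := by
    intro g A
    obtain ⟨u, F, p, hp, hg⟩ := hgen (g⁻¹ : G).1 (g⁻¹ : G).2
    have hpG : p ∈ G := by
      have : p = (T u)⁻¹ * (g⁻¹ : G).1 := by rw [hg]; group
      rw [this]
      exact mul_mem (inv_mem (hTG u)) (g⁻¹ : G).2
    have hlim : Tendsto (fun i : Finset (V d) × ℕ =>
        1 - (((Bx d i.2).filter (fun b => u + b ∈ Bx d i.2)).card : ℝ) / (Bx d i.2).card)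
        atTop (𝓝 0) := by
      have h2 : Tendsto (fun i : Finset (V d) × ℕ => i.2) atTop atTop := by
        rw [← prod_atTop_atTop_eq]
        exact tendsto_snd
      have := ((Bx_folner u).comp h2).const_sub 1
      simpa using this
    apply squeeze_zero_norm' _ hlim
    filter_upwards [eventually_ge_atTop ((F, 0) : Finset (V d) × ℕ)] with i hi
    have hpi : p ∈ L i.1 := hL F i.1 hi.1 hp
    have key : ∀ b ∈ Bx d i.2, φ i ((g * ·) '' A) b = φ i A (u + b) := by
      intro b hb
      simp only [φ]
      congr 1
      let r : H i := ⟨(T b)⁻¹ * p * T b, hH i p hpi hpG b hb⟩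
      refine Fintype.sum_equiv (Equiv.mulLeft r) _ _ ?_
      intro h
      congr 1
      apply propext
      have e : (⟨T (u + b) * ((Equiv.mulLeft r) h).1,
          mul_mem (hTG _) ((Equiv.mulLeft r) h).2.2⟩ : G) =
          g⁻¹ * ⟨T b * h.1, mul_mem (hTG b) h.2.2⟩ := by
        apply Subtype.ext
        rw [Subgroup.coe_mul, hg]
        show T (u + b) * ((T b)⁻¹ * p * T b * h.1) = _
        rw [hT]
        group
      rw [e]
      constructor
      · rintro ⟨a, ha, hae⟩
        rw [← hae]
        simpa using ha
      · intro ha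
        exact ⟨_, ha, by simp⟩
    have : μ i ((g * ·) '' A) - μ i A =
        (∑ b ∈ Bx d i.2, φ i A (u + b) - ∑ b ∈ Bx d i.2, φ i A b) / (Bx d i.2).card := by
      simp only [μ]
      rw [Finset.sum_congr rfl key, sub_div]
    rw [this, Real.norm_eq_abs, abs_div, abs_of_pos (hB i.2), div_le_iff₀ (hB i.2), sub_mul,
      div_mul_cancel₀ _ (hB i.2).ne', one_mul]
    exact sum_shift _ u _ (φ0 i A) (φ1 i A)
  -- ultralimit
  let U : Ultrafilter (Finset (V d) × ℕ) := Ultrafilter.of atTop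
  have hU : (U : Filter (Finset (V d) × ℕ)) ≤ atTop := Ultrafilter.of_le _
  have hex : ∀ S : Set G, ∃ x ∈ Set.Icc (0 : ℝ) 1, Tendsto (fun i => μ i S) U (𝓝 x) := by
    intro S
    have hc : IsCompact (Set.Icc (0 : ℝ) 1) := isCompact_Icc
    obtain ⟨x, hx, hle⟩ := hc.ultrafilter_le_nhds (U.map (fun i => μ i S)) (by
      rw [le_principal_iff]
      exact Filter.mem_map.2 (Filter.univ_mem' fun i => ⟨μ0 i S, μ1 i S⟩))
    exact ⟨x, hx, hle⟩
  choose m hm1 hm2 using hex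
  refine ⟨m, fun A => (hm1 A).1, ?_, ?_, ?_⟩
  · refine tendsto_nhds_unique (hm2 _) ?_
    simp only [μu]
    exact tendsto_const_nhds
  · intro A B hAB
    refine tendsto_nhds_unique (hm2 _) ?_
    simp only [μa _ A B hAB]
    exact (hm2 A).add (hm2 B)
  · intro g A
    have h1 := (μinv g A).mono_left hU
    have h2 := (hm2 ((g * ·) '' A)).sub (hm2 A)
    exact sub_eq_zero.1 (tendsto_nhds_unique h2 h1)

end OBA

/-- The group `OB(ℤ^d,n,k)` of oblivious Turing machines is amenable. -/
theorem ob_amenable (d n k : ℕ) (hd : 1 ≤ d) (hn : 1 ≤ n) (hk : 1 ≤ k) :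
    IsAmenable (OBgrp d n k) :=
  OBA.amen (OBgrp d n k) OBA.Tm OBA.Tm_add OBA.Tm_mem (OBA.LG d n k)
    (fun _ _ h => OBA.LG_mono h) (OBA.LG_finite hn) OBA.conj_LG OBA.gen
end

section
/- Let d, k ≥ 1 and n ≥ 2, and let G be a finite group. Then the restricted wreath product G ≀ ℤ^d embeds into OB(ℤ^d,n,k). -/
open Function

/-- The subgroup of `G^{ℤ^d}` of finitely supported functions (the base group
`⨁_{ℤ^d} G` of the restricted wreath product). -/
def lampSupp (d : ℕ) (G : Type) [Group G] : Subgroup (V d → G) where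
  carrier := {f | {v | f v ≠ 1}.Finite}
  one_mem' := by simp
  mul_mem' := by
    intro a b ha hb
    refine (ha.union hb).subset fun v hv => ?_
    by_contra h
    simp only [Set.mem_union, Set.mem_setOf_eq, not_or, not_not] at h
    exact hv (by simp [Pi.mul_apply, h.1, h.2])
  inv_mem' := by
    intro a ha
    refine ha.subset fun v hv => ?_
    simp only [Set.mem_setOf_eq] at hv ⊢
    intro h
    exact hv (by simp [Pi.inv_apply, h])

/-- Translation by `u ∈ ℤ^d` as an automorphism of `⨁_{ℤ^d} G`. -/
def transAut (d : ℕ) (G : Type) [Group G] (u : V d) : MulAut (lampSupp d G) where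
  toFun f := ⟨fun v => f.val (v - u), by
    refine (f.prop.image (fun v => v + u)).subset fun v hv => ?_
    exact ⟨v - u, hv, by ring⟩⟩
  invFun f := ⟨fun v => f.val (v + u), by
    refine (f.prop.image (fun v => v - u)).subset fun v hv => ?_
    exact ⟨v + u, hv, by ring⟩⟩
  left_inv f := Subtype.ext (funext fun v => congrArg f.val (by ring))
  right_inv f := Subtype.ext (funext fun v => congrArg f.val (by ring))
  map_mul' f g := rfl

/-- The translation action of `ℤ^d` on `⨁_{ℤ^d} G`. -/
def wreathAct (d : ℕ) (G : Type) [Group G] :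
    Multiplicative (V d) →* MulAut (lampSupp d G) where
  toFun u := transAut d G u.toAdd
  map_one' := by
    ext f v
    exact congrArg f.val (by rw [toAdd_one, sub_zero])
  map_mul' u w := by
    ext f v
    exact congrArg f.val (by rw [toAdd_mul]; exact (sub_sub _ _ _).symm)

section Helpers

variable {d n k : ℕ} {G R : Type} [Group G]

/-- action on relative tapes -/
def relAct (s : V d ≃ V d × R) (ρ : G →* Equiv.Perm (R → Fin n)) (f : V d → G)
    (x : V d → Fin n) : V d → Fin n :=
  fun t => ρ (f (-(s t).1)) (fun r => x (s.symm ((s t).1, r))) (s t).2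

theorem relAct_one (s : V d ≃ V d × R) (ρ : G →* Equiv.Perm (R → Fin n))
    (x : V d → Fin n) : relAct s ρ 1 x = x := by
  funext t
  simp [relAct]

theorem relAct_mul (s : V d ≃ V d × R) (ρ : G →* Equiv.Perm (R → Fin n)) (f g : V d → G)
    (x : V d → Fin n) : relAct s ρ (f * g) x = relAct s ρ f (relAct s ρ g x) := by
  funext t
  simp [relAct]

open Classical in
/-- head position -/
noncomputable def hpos (y : V d → Option (Fin k)) : V d :=
  if h : ∃ v, (y v).isSome then h.choose else 0

theorem hpos_eq {y : V d → Option (Fin k)} (hy : headOk y) {v : V d} (hv : (y v).isSome) :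
    hpos y = v := by
  have h : ∃ v, (y v).isSome := ⟨v, hv⟩
  unfold hpos
  rw [dif_pos h]
  exact hy _ _ h.choose_spec hv

open Classical in
/-- action on configurations -/
noncomputable def confAct (s : V d ≃ V d × R) (ρ : G →* Equiv.Perm (R → Fin n)) (f : V d → G)
    (c : X d n k) : X d n k :=
  if ∃ v, (c.val.2 v).isSome then
    ⟨(fun t => relAct s ρ f (fun u => c.val.1 (u + hpos c.val.2)) (t - hpos c.val.2), c.val.2),
      c.prop⟩
  else c

theorem confAct_head (s : V d ≃ V d × R) (ρ : G →* Equiv.Perm (R → Fin n)) (f : V d → G)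
    (c : X d n k) : (confAct s ρ f c).val.2 = c.val.2 := by
  unfold confAct
  split_ifs <;> rfl

theorem confAct_none (s : V d ≃ V d × R) (ρ : G →* Equiv.Perm (R → Fin n)) (f : V d → G)
    (c : X d n k) (h : ∀ v, c.val.2 v = none) : confAct s ρ f c = c := by
  unfold confAct
  rw [if_neg]
  simp [h]

theorem confAct_tape (s : V d ≃ V d × R) (ρ : G →* Equiv.Perm (R → Fin n)) (f : V d → G)
    (c : X d n k) (v : V d) (h : (c.val.2 v).isSome) (t : V d) :
    (confAct s ρ f c).val.1 t = relAct s ρ f (fun u => c.val.1 (u + v)) (t - v) := by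
  unfold confAct
  rw [if_pos ⟨v, h⟩, hpos_eq c.prop h]

theorem X_ext {c c' : X d n k} (h1 : ∀ t, c.val.1 t = c'.val.1 t) (h2 : c.val.2 = c'.val.2) :
    c = c' :=
  Subtype.ext (Prod.ext (funext h1) h2)

theorem X_cases (c : X d n k) : (∀ v, c.val.2 v = none) ∨ ∃ v, (c.val.2 v).isSome := by
  by_cases h : ∃ v, (c.val.2 v).isSome
  · exact Or.inr h
  · left
    intro v
    push Not at h
    simpa using h v

theorem confAct_one (s : V d ≃ V d × R) (ρ : G →* Equiv.Perm (R → Fin n))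
    (c : X d n k) : confAct s ρ 1 c = c := by
  rcases X_cases c with h | ⟨v, h⟩
  · exact confAct_none s ρ _ c h
  · refine X_ext (fun t => ?_) (confAct_head s ρ _ c)
    rw [confAct_tape s ρ _ c v h, relAct_one]
    simp

theorem confAct_mul (s : V d ≃ V d × R) (ρ : G →* Equiv.Perm (R → Fin n)) (f g : V d → G)
    (c : X d n k) : confAct s ρ (f * g) c = confAct s ρ f (confAct s ρ g c) := by
  rcases X_cases c with h | ⟨v, h⟩
  · rw [confAct_none s ρ _ c h, confAct_none s ρ _ c h, confAct_none s ρ _ c h]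
  · refine X_ext (fun t => ?_) (by simp only [confAct_head])
    rw [confAct_tape s ρ _ c v h, confAct_tape s ρ f _ v (by rw [confAct_head]; exact h),
      relAct_mul]
    congr 1
    funext u
    rw [confAct_tape s ρ _ c v h]
    simp

/-- lamps as permutations -/
noncomputable def lampHom (k : ℕ) (s : V d ≃ V d × R) (ρ : G →* Equiv.Perm (R → Fin n)) :
    lampSupp d G →* Equiv.Perm (X d n k) where
  toFun f :=
    { toFun := confAct s ρ f.val
      invFun := confAct s ρ (f.val)⁻¹
      left_inv := fun c => by rw [← confAct_mul, inv_mul_cancel, confAct_one]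
      right_inv := fun c => by rw [← confAct_mul, mul_inv_cancel, confAct_one] }
  map_one' := Equiv.ext fun c => confAct_one s ρ c
  map_mul' f g := Equiv.ext fun c => confAct_mul s ρ f.val g.val c

theorem confAct_isTM [Finite R] (s : V d ≃ V d × R) (ρ : G →* Equiv.Perm (R → Fin n))
    (f : V d → G) (hf : {v | f v ≠ 1}.Finite) :
    IsTM (confAct (k := k) s ρ f) := by
  have hfin : {t : V d | f (-(s t).1) ≠ 1}.Finite := by
    refine (((hf.image (fun v => -v)).prod (Set.finite_univ (α := R))).preimage
      (f := s) s.injective.injOn).subset ?_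
    intro t ht
    exact ⟨⟨-(s t).1, ht, neg_neg _⟩, trivial⟩
  have hmem : ∀ t, t ∈ hfin.toFinset ↔ f (-(s t).1) ≠ 1 := fun t => by simp
  refine ⟨hfin.toFinset, hfin.toFinset, fun x q => (relAct s ρ f x, q, 0), ?_, ?_, ?_⟩
  · intro x x' q h
    refine ⟨fun v hv => ?_, rfl⟩
    have : (fun r => x (s.symm ((s v).1, r))) = (fun r => x' (s.symm ((s v).1, r))) := by
      funext r
      apply h
      rw [hmem] at hv ⊢
      simpa using hv
    simp only [relAct, this]
  · intro c h
    exact confAct_none s ρ f c h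
  · intro c v q h
    have h' : (c.val.2 v).isSome := by rw [h]; rfl
    refine ⟨fun t => ?_, fun t => ?_⟩
    · rw [confAct_tape s ρ f c v h']
      split_ifs with ht
      · rfl
      · rw [hmem, not_not] at ht
        simp [relAct, ht]
    · rw [confAct_head]
      simp only [add_zero]
      split_ifs with ht
      · rw [ht, h]
      · by_contra h2
        exact ht (c.prop _ _ (Option.isSome_iff_ne_none.2 h2) h')

theorem lampHom_mem [Finite R] (s : V d ≃ V d × R) (ρ : G →* Equiv.Perm (R → Fin n))
    (f : lampSupp d G) : lampHom k s ρ f ∈ LPset d n k := by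
  refine ⟨⟨confAct_isTM s ρ f.val f.prop, confAct_isTM s ρ _ (f⁻¹).prop⟩, fun c v => ?_⟩
  exact congrArg (fun y : V d → Option (Fin k) => (y v).isSome) (confAct_head s ρ f.val c)

/-- moving the head -/
def shiftFun (u : V d) (c : X d n k) : X d n k :=
  ⟨(c.val.1, fun t => c.val.2 (t - u)), fun a b ha hb => by
    have := c.prop (a - u) (b - u) ha hb
    exact sub_left_injective this⟩

theorem shiftFun_zero (c : X d n k) : shiftFun 0 c = c :=
  X_ext (fun _ => rfl) (funext fun t => by simp [shiftFun])

theorem shiftFun_add (u w : V d) (c : X d n k) :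
    shiftFun (u + w) c = shiftFun u (shiftFun w c) :=
  X_ext (fun _ => rfl) (funext fun t => by simp [shiftFun, sub_sub])

/-- head movements as permutations -/
def shiftHom (d n k N : ℕ) : Multiplicative (V d) →* Equiv.Perm (X d n k) where
  toFun u :=
    { toFun := shiftFun (N • u.toAdd)
      invFun := shiftFun (-(N • u.toAdd))
      left_inv := fun c => by rw [← shiftFun_add, neg_add_cancel, shiftFun_zero]
      right_inv := fun c => by rw [← shiftFun_add, add_neg_cancel, shiftFun_zero] }
  map_one' := Equiv.ext fun c => by
    simp [shiftFun_zero]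
  map_mul' u w := Equiv.ext fun c => by
    simp [shiftFun_add]

theorem shiftHom_mem (N : ℕ) (u : Multiplicative (V d)) :
    shiftHom d n k N u ∈ Shiftset d n k :=
  ⟨N • u.toAdd, fun _ => ⟨rfl, fun _ => rfl⟩⟩

theorem compat (N : ℕ) (s : V d ≃ V d × R)
    (hs : ∀ t u, s (t + N • u) = ((s t).1 + u, (s t).2))
    (ρ : G →* Equiv.Perm (R → Fin n)) (f : lampSupp d G) (u : Multiplicative (V d)) :
    lampHom k s ρ (wreathAct d G u f) * shiftHom d n k N u =
      shiftHom d n k N u * lampHom k s ρ f := by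
  have hs2 : ∀ w u r, s.symm (w + u, r) = s.symm (w, r) + N • u := by
    intro w u r
    rw [Equiv.symm_apply_eq, hs]
    simp
  refine Equiv.ext fun c => ?_
  change confAct s ρ (fun v => f.val (v - u.toAdd)) (shiftFun (N • u.toAdd) c) =
    shiftFun (N • u.toAdd) (confAct s ρ f.val c)
  generalize u.toAdd = u
  rcases X_cases c with h | ⟨v, h⟩
  · rw [confAct_none s ρ _ c h, confAct_none]
    intro v
    exact h _
  · refine X_ext (fun t => ?_) ?_
    · rw [confAct_tape s ρ _ _ (v + N • u) (by simpa [shiftFun] using h)]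
      change _ = (confAct s ρ f.val c).val.1 t
      rw [confAct_tape s ρ _ c v h]
      obtain ⟨t, rfl⟩ : ∃ t', t = t' + N • u + v := ⟨t - N • u - v, by abel⟩
      have e1 : t + N • u + v - (v + N • u) = t := by abel
      have e2 : t + N • u + v - v = t + N • u := by abel
      rw [e1, e2]
      simp only [relAct, hs, hs2]
      have e3 : -(s t).1 - u = -((s t).1 + u) := by abel
      rw [e3]
      refine congrFun (congrArg (ρ (f.val (-((s t).1 + u)))) (funext fun r => ?_)) (s t).2
      exact congrArg c.val.1 (by abel)
    · rw [confAct_head]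
      funext t
      simp [shiftFun, confAct_head]

theorem exists_split (d N : ℕ) [NeZero N] : ∃ s : V d ≃ V d × (Fin d → Fin N),
    ∀ t u, s (t + N • u) = ((s t).1 + u, (s t).2) := by
  refine ⟨(Equiv.piCongrRight fun _ => Int.divModEquiv N).trans
    (Equiv.arrowProdEquivProdArrow (Fin d) (fun _ => ℤ) (fun _ => Fin N)), fun t u => ?_⟩
  have hN : (N : ℤ) ≠ 0 := by exact_mod_cast NeZero.ne N
  refine Prod.ext (funext fun i => ?_) (funext fun i => ?_)
  · simp [Int.divModEquiv, Equiv.arrowProdEquivProdArrow, Int.add_mul_ediv_left _ _ hN]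
  · simp [Int.divModEquiv, Equiv.arrowProdEquivProdArrow, Int.natMod]

theorem exists_rho (hd : 1 ≤ d) (hn : 2 ≤ n) (G : Type) [Group G] [Finite G] :
    ∃ (N : ℕ) (_ : NeZero N) (ρ : G →* Equiv.Perm ((Fin d → Fin N) → Fin n)),
      Function.Injective ρ := by
  classical
  haveI := Fintype.ofFinite G
  refine ⟨Fintype.card G, ⟨Fintype.card_ne_zero⟩, ?_⟩
  have hc : Fintype.card G ≤ Fintype.card ((Fin d → Fin (Fintype.card G)) → Fin n) := by
    simp only [Fintype.card_fun, Fintype.card_fin]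
    calc Fintype.card G ≤ Fintype.card G ^ d := Nat.le_self_pow (by omega) _
      _ ≤ n ^ (Fintype.card G ^ d) := (Nat.lt_pow_self (by omega)).le
  obtain ⟨e⟩ := Function.Embedding.nonempty_of_card_le hc
  exact ⟨(Equiv.Perm.viaEmbeddingHom e).comp (MulAction.toPermHom G G),
    (Equiv.Perm.viaEmbeddingHom_injective e).comp MulAction.toPerm_injective⟩

theorem lift_inj (hk : 1 ≤ k) (N : ℕ) [NeZero N] (s : V d ≃ V d × R)
    (ρ : G →* Equiv.Perm (R → Fin n)) (hn : 2 ≤ n) (hρ : Function.Injective ρ)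
    (f : lampSupp d G) (u : Multiplicative (V d))
    (h : lampHom k s ρ f * shiftHom d n k N u = 1) : f = 1 ∧ u = 1 := by
  classical
  let mk : (V d → Fin n) → X d n k := fun x =>
    ⟨(x, fun v => if v = 0 then some ⟨0, hk⟩ else none), fun a b ha hb => by
      by_cases h1 : a = 0 <;> by_cases h2 : b = 0 <;> simp_all⟩
  have key : ∀ x, confAct s ρ f.val (shiftFun (N • u.toAdd) (mk x)) = mk x :=
    fun x => Equiv.ext_iff.1 h (mk x)
  have hu : u.toAdd = 0 := by
    have h1 := congrArg (fun c : X d n k => c.val.2 0) (key fun _ => ⟨0, by omega⟩)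
    simp only [confAct_head] at h1
    by_contra h4
    simp [shiftFun, mk, -nsmul_eq_mul, NeZero.ne N] at h1
    exact h4 h1
  refine ⟨?_, hu⟩
  rw [hu] at key
  simp only [smul_zero, shiftFun_zero] at key
  refine Subtype.ext (funext fun w => ?_)
  apply hρ
  change ρ (f.val w) = ρ 1
  rw [map_one]
  refine Equiv.ext fun β => funext fun r => ?_
  have h2 := congrArg (fun c : X d n k => c.val.1 (s.symm (-w, r))) (key fun t => β (s t).2)
  change (confAct s ρ f.val (mk _)).val.1 _ = _ at h2
  rw [confAct_tape s ρ _ _ 0 (by simp [mk])] at h2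
  simpa [relAct, mk] using h2

end Helpers

/-- For `n ≥ 2` and any finite group `G`, the restricted wreath product
`G ≀ ℤ^d = (⨁_{ℤ^d} G) ⋊ ℤ^d` embeds into `OB(ℤ^d,n,k)`. -/
theorem wreath_embeds_ob (d n k : ℕ) (hd : 1 ≤ d) (hn : 2 ≤ n) (hk : 1 ≤ k)
    (G : Type) [Group G] [Finite G] :
    ∃ φ : (lampSupp d G) ⋊[wreathAct d G] Multiplicative (V d) →* OBgrp d n k,
      Function.Injective ⇑φ := by
  obtain ⟨N, hN, ρ, hρ⟩ := exists_rho (d := d) hd hn G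
  obtain ⟨s, hs⟩ := exists_split d N
  let L : (lampSupp d G) ⋊[wreathAct d G] Multiplicative (V d) →* Equiv.Perm (X d n k) :=
    SemidirectProduct.lift (lampHom k s ρ) (shiftHom d n k N) (fun u => by
      ext1 f
      simp only [MonoidHom.comp_apply, MulEquiv.coe_toMonoidHom, MulAut.conj_apply]
      exact eq_mul_inv_of_mul_eq (compat N s hs ρ f u))
  have hL : ∀ a, L a ∈ OBgrp d n k := fun a =>
    mul_mem (Subgroup.subset_closure (Or.inr (lampHom_mem s ρ a.left)))
      (Subgroup.subset_closure (Or.inl (shiftHom_mem N a.right)))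
  refine ⟨L.codRestrict _ hL, ?_⟩
  rw [injective_iff_map_eq_one]
  intro a ha
  have h1 : L a = 1 := congrArg Subtype.val ha
  obtain ⟨h2, h3⟩ := lift_inj hk N s ρ hn hρ a.left a.right h1
  exact SemidirectProduct.ext h2 h3
end

section
/- For all d, n, k ≥ 1, the group OB(ℤ^d,n,k) of oblivious Turing machines is finitely generated. -/
open Function

namespace OBP

open Equiv
open scoped commutatorElement

set_option linter.unusedSectionVars false

section abs
variable {I S Q : Type} [DecidableEq I]

abbrev Om (I S Q : Type) : Type := (I → S) × Q

abbrev BB (S Q : Type) (E : Finset I) : Type := ({i // i ∈ E} → S) × Q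

abbrev RR (S : Type) (E : Finset I) : Type := {i // i ∉ E} → S

def res (E : Finset I) (w : Om I S Q) : BB S Q E := (fun i => w.1 i, w.2)

def resc (E : Finset I) (w : Om I S Q) : RR S E := fun i => w.1 i

def glue (E : Finset I) (b : BB S Q E) (w : Om I S Q) : Om I S Q :=
  (fun i => if h : i ∈ E then b.1 ⟨i, h⟩ else w.1 i, b.2)

@[simp] lemma res_glue (E : Finset I) (b : BB S Q E) (w : Om I S Q) : res E (glue E b w) = b := by
  ext i <;> simp [res, glue]

@[simp] lemma resc_glue (E : Finset I) (b : BB S Q E) (w : Om I S Q) :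
    resc E (glue E b w) = resc E w := by
  ext i; simp [resc, glue, i.2]

@[simp] lemma glue_res (E : Finset I) (w : Om I S Q) : glue E (res E w) w = w := by
  ext i <;> simp [res, glue]

@[simp] lemma glue_glue (E : Finset I) (b b' : BB S Q E) (w : Om I S Q) :
    glue E b (glue E b' w) = glue E b w := by
  ext i
  · simp only [glue]; split_ifs <;> rfl
  · rfl

/-- fibrewise permutations -/
def shear (E : Finset I) : (RR S E → Perm (BB S Q E)) →* Perm (Om I S Q) where
  toFun φ :=
    { toFun := fun w => glue E (φ (resc E w) (res E w)) w
      invFun := fun w => glue E ((φ (resc E w))⁻¹ (res E w)) w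
      left_inv := fun w => by simp
      right_inv := fun w => by simp }
  map_one' := by ext1 w; simp
  map_mul' φ ψ := by ext1 w; simp

lemma shear_apply (E : Finset I) (φ : RR S E → Perm (BB S Q E)) (w : Om I S Q) :
    shear E φ w = glue E (φ (resc E w) (res E w)) w := rfl

open Classical in
noncomputable def ctl {R G : Type} [Group G] (C : Set R) : G →* (R → G) where
  toFun g := fun r => if r ∈ C then g else 1
  map_one' := by ext; simp
  map_mul' g h := by ext r; by_cases hr : r ∈ C <;> simp [hr]

lemma ctl_univ {R G : Type} [Group G] (g : G) : ctl (Set.univ : Set R) g = fun _ => g := by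
  ext; simp [ctl]

lemma ctl_comm {R G : Type} [Group G] (C D : Set R) (g h : G) :
    ctl (C ∩ D) ⁅g, h⁆ = ⁅ctl C g, ctl D h⁆ := by
  ext r
  by_cases hc : r ∈ C <;> by_cases hd : r ∈ D <;> simp [ctl, hc, hd, commutatorElement_def]

def CS (E F : Finset I) (a : I → S) : Set (RR S E) := {r | ∀ i : {i // i ∉ E}, i.1 ∈ F → r i = a i}

lemma res_eq_iff {E F : Finset I} (hEF : E ⊆ F) (w a : Om I S Q) :
    res F w = res F a ↔ res E w = res E a ∧ resc E w ∈ CS E F a.1 := by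
  simp only [res, resc, CS, Prod.ext_iff, funext_iff, Subtype.forall, Set.mem_ofPred_eq]
  constructor
  · rintro ⟨h1, h2⟩
    exact ⟨⟨fun i hi => h1 i (hEF hi), h2⟩, fun i _ hi => h1 i hi⟩
  · rintro ⟨⟨h1, h2⟩, h3⟩
    refine ⟨fun i hi => ?_, h2⟩
    by_cases h : i ∈ E
    · exact h1 i h
    · exact h3 i h hi

lemma glue_eq {E F : Finset I} (hEF : E ⊆ F) (w a b : Om I S Q)
    (hab : ∀ i ∈ F, i ∉ E → a.1 i = b.1 i) (hw : resc E w ∈ CS E F a.1) :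
    glue F (res F b) w = glue E (res E b) w := by
  ext i
  · simp only [glue, res]
    by_cases h : i ∈ E
    · simp [h, hEF h]
    · by_cases h' : i ∈ F
      · simp only [h, h', dite_true, dite_false]
        rw [← hab i h' h]
        exact (hw ⟨i, h⟩ h').symm
      · simp [h, h']
  · rfl

lemma CS_congr {E F : Finset I} {a b : I → S} (hab : ∀ i ∈ F, i ∉ E → a i = b i) :
    CS E F a = CS E F b := by
  ext r
  simp only [CS, Set.mem_ofPred_eq]
  refine forall_congr' fun i => ?_
  constructor
  · intro h hi; rw [h hi, hab _ hi i.2]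
  · intro h hi; rw [h hi, hab _ hi i.2]

lemma bridge [DecidableEq S] [DecidableEq Q] {E F : Finset I} (hEF : E ⊆ F) (a b : Om I S Q)
    (hab : ∀ i ∈ F, i ∉ E → a.1 i = b.1 i) :
    shear F (fun _ => swap (res F a) (res F b)) =
      shear E (ctl (CS E F a.1) (swap (res E a) (res E b))) := by
  ext1 w
  have hC : CS E F a.1 = CS E F b.1 := CS_congr hab
  rw [shear_apply, shear_apply]
  simp only [ctl, MonoidHom.coe_mk, OneHom.coe_mk]
  by_cases hw : resc E w ∈ CS E F a.1
  · rw [if_pos hw, swap_apply_def, swap_apply_def]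
    have ha := res_eq_iff hEF w a
    have hb := res_eq_iff hEF w b
    rw [← hC] at hb
    simp only [ha, hb, hw, and_true]
    split_ifs
    · exact glue_eq hEF w a b hab hw
    · exact glue_eq hEF w b a (fun i h h' => (hab i h h').symm) (hC ▸ hw)
    · simp
  · rw [if_neg hw, swap_apply_of_ne_of_ne]
    · simp
    · rw [Ne, res_eq_iff hEF]; exact fun h => hw h.2
    · rw [Ne, res_eq_iff hEF]; exact fun h => hw (hC ▸ h.2)

/-- local permutations -/
def Loc (E : Finset I) : Set (Perm (Om I S Q)) :=
  {π | (∀ w, ∀ i ∉ E, (π w).1 i = w.1 i) ∧ ∀ w w', res E w = res E w' → res E (π w) = res E (π w')}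

lemma Loc_mono {E F : Finset I} (hEF : E ⊆ F) : (Loc E : Set (Perm (Om I S Q))) ⊆ Loc F := by
  rintro π ⟨h1, h2⟩
  refine ⟨fun w i hi => h1 w i fun h => hi (hEF h), fun w w' h => ?_⟩
  rw [res_eq_iff hEF] at h ⊢
  refine ⟨h2 _ _ h.1, fun i hi => ?_⟩
  simp only [resc]
  rw [h1 _ _ i.2, h1 _ _ i.2]
  exact h.2 i hi

lemma shear_const_mem (E : Finset I) (g : Perm (BB S Q E)) :
    shear E (fun _ => g) ∈ (Loc E : Set (Perm (Om I S Q))) := by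
  refine ⟨fun w i hi => ?_, fun w w' h => ?_⟩
  · simp [shear_apply, glue, hi]
  · simp [shear_apply, h]

lemma shear_ctl_mem (E F : Finset I) (hEF : E ⊆ F) (a : I → S) (g : Perm (BB S Q E)) :
    shear E (ctl (CS E F a) g) ∈ (Loc F : Set (Perm (Om I S Q))) := by
  refine ⟨fun w i hi => ?_, fun w w' h => ?_⟩
  · have : i ∉ E := fun h => hi (hEF h)
    simp [shear_apply, glue, this]
  · rw [res_eq_iff hEF] at h ⊢
    have : resc E w ∈ CS E F a ↔ resc E w' ∈ CS E F a := by
      simp only [CS, Set.mem_ofPred_eq]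
      refine forall_congr' fun i => ?_
      constructor
      · intro h' hi; rw [← h' hi]; exact (h.2 i hi).symm
      · intro h' hi; rw [← h' hi]; exact (h.2 i hi)
    constructor
    · simp only [shear_apply, res_glue, ctl, MonoidHom.coe_mk, OneHom.coe_mk, h.1]
      by_cases hh : resc E w' ∈ CS E F a
      · rw [if_pos hh, if_pos (this.2 hh)]
      · rw [if_neg hh, if_neg (fun h => hh (this.1 h))]
    · intro i hi
      rw [shear_apply, shear_apply, resc_glue]
      simp only [glue, i.2, dite_false]
      exact h.2 i hi

lemma Loc_eq_range [Fintype S] [Fintype Q] [Nonempty S] (E : Finset I) {π : Perm (Om I S Q)}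
    (hπ : π ∈ Loc E) :
    ∃ g : Perm (BB S Q E), π = shear E (fun _ => g) := by
  obtain ⟨h1, h2⟩ := hπ
  obtain ⟨s⟩ := ‹Nonempty S›
  by_cases hQ : Nonempty Q
  swap
  · refine ⟨1, ?_⟩
    ext1 w; exact absurd ⟨w.2⟩ hQ
  obtain ⟨q⟩ := hQ
  let w0 : Om I S Q := (fun _ => s, q)
  let f : BB S Q E → BB S Q E := fun b => res E (π (glue E b w0))
  have key : ∀ w w' : Om I S Q, res E w = res E w' → resc E w = resc E w' → w = w' := by
    intro w w' h h'
    rw [← glue_res E w, h]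
    conv_rhs => rw [← glue_res E w']
    ext i
    · simp only [glue]
      split_ifs with hi
      · rfl
      · exact congrFun h' ⟨i, hi⟩
    · rfl
  have hrc : ∀ w, resc E (π w) = resc E w := fun w => funext fun i => h1 w i i.2
  have hf : Function.Injective f := by
    intro b b' h
    have : π (glue E b w0) = π (glue E b' w0) := key _ _ h (by simp [hrc])
    have := π.injective this
    rw [← res_glue E b w0, this, res_glue]
  refine ⟨Equiv.ofBijective f (Finite.injective_iff_bijective.1 hf), ?_⟩
  ext1 w
  apply key
  · rw [shear_apply, res_glue]
    exact h2 _ _ (by simp)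
  · rw [hrc, shear_apply, resc_glue]

end abs
end OBP

namespace OBP

open Equiv
open scoped commutatorElement
set_option linter.unusedSectionVars false
section gen
variable {I S Q : Type} [DecidableEq I] [DecidableEq S] [DecidableEq Q] [Fintype S] [Fintype Q]

lemma CS_insert_of_mem {E D : Finset I} (a : I → S) {x : I} (hx : x ∈ E) :
    CS E (insert x D) a = CS E D a := by
  ext r
  simp only [CS, Set.mem_ofPred_eq, Finset.mem_insert]
  refine forall_congr' fun i => ?_
  have : i.1 ≠ x := fun h => i.2 (h ▸ hx)
  simp [this]

lemma CS_insert {E D : Finset I} (a : I → S) (x : I) :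
    CS E (insert x D) a = CS E D a ∩ CS E (insert x E) a := by
  ext r
  simp only [CS, Set.mem_ofPred_eq, Finset.mem_insert, Set.mem_inter_iff]
  rw [← forall_and]
  refine forall_congr' fun i => ?_
  have := i.2
  tauto

lemma claimA (H : Subgroup (Perm (Om I S Q))) (hH : ∀ E : Finset I, E.card ≤ 5 → Loc E ⊆ (H : Set (Perm (Om I S Q))))
    (E : Finset I) (hE : E.card ≤ 4) (h5 : 5 ≤ Nat.card (BB S Q E)) (D : Finset I) (a : I → S)
    (g : Perm (BB S Q E)) (hg : g ∈ alternatingGroup (BB S Q E)) :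
    shear E (ctl (CS E D a) g) ∈ H := by
  induction D using Finset.induction_on generalizing g with
  | empty =>
    have : CS E ∅ a = Set.univ := by ext r; simp [CS]
    rw [this, ctl_univ]
    exact hH E (by omega) (shear_const_mem E g)
  | insert x D hx ih =>
    rw [CS_insert]
    have key : alternatingGroup (BB S Q E) ≤
        H.comap ((shear E).comp (ctl (CS E D a ∩ CS E (insert x E) a))) := by
      rw [← commutator_alternatingGroup_eq_self h5, Subgroup.commutator_le]
      intro g₁ h₁ g₂ h₂
      rw [Subgroup.mem_comap, MonoidHom.comp_apply, ctl_comm, map_commutatorElement,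
        commutatorElement_def]
      have m1 := ih g₁ h₁
      have m2 : shear E (ctl (CS E (insert x E) a) g₂) ∈ H :=
        hH (insert x E) ((Finset.card_insert_le _ _).trans (by omega))
          (shear_ctl_mem E _ (Finset.subset_insert _ _) a g₂)
      exact H.mul_mem (H.mul_mem (H.mul_mem m1 m2) (H.inv_mem m1)) (H.inv_mem m2)
    exact key hg

lemma card_BB (hS : 2 ≤ Fintype.card S) [Nonempty Q] (E : Finset I) (hE : 3 ≤ E.card) :
    5 ≤ Nat.card (BB S Q E) := by
  rw [Nat.card_eq_fintype_card, Fintype.card_prod, Fintype.card_fun, Fintype.card_coe]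
  have h1 : 2 ^ 3 ≤ Fintype.card S ^ E.card :=
    (Nat.pow_le_pow_left hS 3).trans (Nat.pow_le_pow_right (by omega) hE)
  have h2 : 0 < Fintype.card Q := Fintype.card_pos
  nlinarith

def upd (a : Om I S Q) (x : I) (s : S) : Om I S Q := (Function.update a.1 x s, a.2)

lemma res_upd {E : Finset I} {x : I} (hx : x ∉ E) (a : Om I S Q) (s : S) :
    res E (upd a x s) = res E a := by
  ext i
  · have : i.1 ≠ x := fun h => hx (h ▸ i.2)
    simp [res, upd, this]
  · rfl

/-- even pair of controlled swaps -/
lemma pair_mem (H : Subgroup (Perm (Om I S Q)))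
    (hH : ∀ E : Finset I, E.card ≤ 5 → Loc E ⊆ (H : Set (Perm (Om I S Q))))
    (hS : 2 ≤ Fintype.card S) {E F : Finset I} (hE : E.card = 3) (hEF : E ⊆ F) {x : I} (hx : x ∉ F)
    (a b : Om I S Q) (hab : ∀ i, i ∉ E → a.1 i = b.1 i) (s t : S) :
    shear E (ctl (CS E (insert x F) (upd a x s).1) (swap (res E a) (res E b))) *
    shear E (ctl (CS E (insert x F) (upd a x t).1) (swap (res E a) (res E b))) ∈ H := by
  have : Nonempty Q := ⟨a.2⟩
  have hxE : x ∉ E := fun h => hx (hEF h)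
  by_cases hne : res E a = res E b
  · rw [hne, swap_self]
    change shear E (ctl _ 1) * shear E (ctl _ 1) ∈ H
    simp [H.one_mem]
  have key : ∀ s, shear E (ctl (CS E (insert x F) (upd a x s).1) (swap (res E a) (res E b))) =
      shear (insert x E) (ctl (CS (insert x E) (insert x F) a.1)
        (swap (res (insert x E) (upd a x s)) (res (insert x E) (upd b x s)))) := by
    intro s
    have hab' : ∀ i, i ∉ E → (upd a x s).1 i = (upd b x s).1 i := by
      intro i hi
      by_cases h : i = x
      · subst h; simp [upd]
      · simp [upd, h, hab i hi]
    have e1 := bridge (hEF.trans (Finset.subset_insert x F)) (upd a x s) (upd b x s)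
      (fun i _ hi => hab' i hi)
    rw [res_upd hxE, res_upd hxE] at e1
    rw [← e1, bridge (Finset.insert_subset_insert x hEF) (upd a x s) (upd b x s)
      (fun i _ hi => hab' i fun h => hi (Finset.mem_insert_of_mem h))]
    congr 2
    congr 1
    apply CS_congr
    intro i _ hi
    have : i ≠ x := fun h => hi (h ▸ Finset.mem_insert_self _ _)
    simp [upd, this]
  have hne' : ∀ s, res (insert x E) (upd a x s) ≠ res (insert x E) (upd b x s) := by
    intro s h
    have := ((res_eq_iff (Finset.subset_insert x E) _ _).1 h).1
    rw [res_upd hxE, res_upd hxE] at this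
    exact hne this
  have hc : (insert x E).card = 4 := by rw [Finset.card_insert_of_notMem hxE, hE]
  rw [key, key, ← map_mul, ← map_mul]
  apply claimA H hH _ (by omega) (card_BB hS _ (by omega))
  exact Perm.mul_mem_alternatingGroup_of_isSwap ⟨_, _, hne' s, rfl⟩ ⟨_, _, hne' t, rfl⟩

def KK (H : Subgroup (Perm (Om I S Q))) (E : Finset I) (τ : Perm (BB S Q E)) :
    AddSubgroup (RR S E → ℤ) where
  carrier := {f | shear E (fun r => τ ^ f r) ∈ H}
  zero_mem' := by
    change shear E (fun r => τ ^ (0 : ℤ)) ∈ H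
    have : (fun _ : RR S E => τ ^ (0 : ℤ)) = 1 := by ext1 r; simp
    rw [this, map_one]; exact H.one_mem
  add_mem' := by
    intro f g hf hg
    have : (fun r => τ ^ ((f + g) r)) = (fun r => τ ^ f r) * (fun r => τ ^ g r) := by
      ext1 r; simp [zpow_add]
    change shear E (fun r => τ ^ ((f + g) r)) ∈ H
    rw [this, map_mul]; exact H.mul_mem hf hg
  neg_mem' := by
    intro f hf
    have : (fun r => τ ^ ((-f) r)) = (fun r => τ ^ f r)⁻¹ := by
      ext1 r; simp
    change shear E (fun r => τ ^ ((-f) r)) ∈ H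
    rw [this, map_inv]; exact H.inv_mem hf

open Classical in
noncomputable def ind {R : Type} (C : Set R) : R → ℤ := fun r => if r ∈ C then 1 else 0

lemma ind_mem_iff (H : Subgroup (Perm (Om I S Q))) (E : Finset I) (τ : Perm (BB S Q E))
    (C : Set (RR S E)) : ind C ∈ KK H E τ ↔ shear E (ctl C τ) ∈ H := by
  have : (fun r => τ ^ ind C r) = ctl C τ := by
    ext1 r; by_cases h : r ∈ C <;> simp [ind, ctl, h]
  change shear E (fun r => τ ^ ind C r) ∈ H ↔ _
  rw [this]

lemma parity (H : Subgroup (Perm (Om I S Q)))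
    (hH : ∀ E : Finset I, E.card ≤ 5 → Loc E ⊆ (H : Set (Perm (Om I S Q))))
    (hS : 2 ≤ Fintype.card S) {E F : Finset I} (hE : E.card = 3) (hEF : E ⊆ F) {x : I} (hx : x ∉ F)
    (a b : Om I S Q) (hab : ∀ i, i ∉ E → a.1 i = b.1 i) :
    ind (CS E F a.1) + Fintype.card S • ind (CS E (insert x F) a.1) ∈
      KK H E (swap (res E a) (res E b)) := by
  set τ := swap (res E a) (res E b) with hτ
  have hxE : x ∉ E := fun h => hx (hEF h)
  have hsum : ind (CS E F a.1) = ∑ s : S, ind (CS E (insert x F) (upd a x s).1) := by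
    ext1 r
    rw [Finset.sum_apply]
    have : ∀ s, ind (CS E (insert x F) (upd a x s).1) r =
        if s = r ⟨x, hxE⟩ then ind (CS E F a.1) r else 0 := by
      intro s
      have : r ∈ CS E (insert x F) (upd a x s).1 ↔ s = r ⟨x, hxE⟩ ∧ r ∈ CS E F a.1 := by
        simp only [CS, Set.mem_ofPred_eq]
        constructor
        · intro h
          refine ⟨?_, fun i hi => ?_⟩
          · rw [h ⟨x, hxE⟩ (Finset.mem_insert_self _ _)]; simp [upd]
          · rw [h i (Finset.mem_insert_of_mem hi)]
            have : i.1 ≠ x := fun h => hx (h ▸ hi)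
            simp [upd, this]
        · rintro ⟨h1, h2⟩ i hi
          by_cases h : i.1 = x
          · have : i = ⟨x, hxE⟩ := Subtype.ext h
            subst this
            simp [upd, h1]
          · rw [h2 i ((Finset.mem_insert.1 hi).resolve_left h)]
            simp [upd, h]
      unfold ind
      by_cases hr : r ∈ CS E (insert x F) (upd a x s).1
      · obtain ⟨h1, h2⟩ := this.1 hr
        rw [if_pos hr, if_pos h1, if_pos h2]
      · rw [if_neg hr]
        by_cases h1 : s = r ⟨x, hxE⟩
        · rw [if_pos h1, if_neg (fun h2 => hr (this.2 ⟨h1, h2⟩))]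
        · rw [if_neg h1]
    simp [this]
  have ha : a.1 = (upd a x (a.1 x)).1 := by simp [upd]
  have e : ind (CS E F a.1) + Fintype.card S • ind (CS E (insert x F) a.1) =
      ∑ s : S, (ind (CS E (insert x F) (upd a x s).1) + ind (CS E (insert x F) a.1)) := by
    rw [hsum, Finset.sum_add_distrib]; simp
  rw [e]
  refine AddSubgroup.sum_mem _ fun s _ => ?_
  have h := pair_mem H hH hS hE hEF hx a b hab s (a.1 x)
  rw [← ha, ← map_mul] at h
  change shear E _ ∈ H
  convert h using 2
  ext1 r
  by_cases h1 : r ∈ CS E (insert x F) (upd a x s).1 <;> by_cases h2 : r ∈ CS E (insert x F) a.1 <;>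
    simp [ind, ctl, h1, h2, hτ, pow_two]

lemma two_mem (H : Subgroup (Perm (Om I S Q))) (E : Finset I) (p q : BB S Q E) (f : RR S E → ℤ) :
    (2 : ℕ) • f ∈ KK H E (swap p q) := by
  change shear E (fun r => swap p q ^ ((2 : ℕ) • f) r) ∈ H
  have : (fun r => swap p q ^ ((2 : ℕ) • f) r) = 1 := by
    ext1 r
    simp [two_mul, zpow_add]
    rw [← (Commute.refl (swap p q)).mul_zpow]
    simp
  rw [this, map_one]; exact H.one_mem

lemma swap_small [Infinite I] (H : Subgroup (Perm (Om I S Q)))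
    (hH : ∀ E : Finset I, E.card ≤ 5 → Loc E ⊆ (H : Set (Perm (Om I S Q))))
    (hS : 2 ≤ Fintype.card S) {E F : Finset I} (hE : E.card = 3) (hEF : E ⊆ F)
    (a b : Om I S Q) (hab : ∀ i, i ∉ E → a.1 i = b.1 i) :
    shear F (fun _ => swap (res F a) (res F b)) ∈ H := by
  rw [bridge hEF a b (fun i _ h => hab i h), ← ind_mem_iff]
  rcases Nat.even_or_odd' (Fintype.card S) with ⟨m, hm | hm⟩
  · obtain ⟨x, hx⟩ := Infinite.exists_notMem_finset F
    have h := parity H hH hS hE hEF hx a b hab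
    rw [hm, mul_smul] at h
    exact (AddSubgroup.add_mem_cancel_right _ (two_mem H E _ _ _)).1 h
  · obtain ⟨D, rfl⟩ : ∃ D, F = D ∪ E := ⟨F, (Finset.union_eq_left.2 hEF).symm⟩
    clear hEF
    induction D using Finset.induction_on with
    | empty =>
      rw [ind_mem_iff]
      exact hH E (by omega) (Loc_mono (by simp) (shear_ctl_mem E (∅ ∪ E) (by simp) a.1 _))
    | insert x D hx ih =>
      rw [Finset.insert_union]
      by_cases hxE : x ∈ D ∪ E
      · rw [Finset.insert_eq_of_mem hxE]; exact ih
      · have h := parity H hH hS hE Finset.subset_union_right hxE a b hab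
        have h := (AddSubgroup.add_mem_cancel_left _ ih).1 h
        rw [hm, add_smul, mul_smul, one_smul] at h
        exact (AddSubgroup.add_mem_cancel_left _ (two_mem H E _ _ _)).1 h

lemma swap_all [Infinite I] (H : Subgroup (Perm (Om I S Q)))
    (hH : ∀ E : Finset I, E.card ≤ 5 → Loc E ⊆ (H : Set (Perm (Om I S Q))))
    (hS : 2 ≤ Fintype.card S) {F : Finset I} (hF : 3 ≤ F.card) (T : Finset I) (hT : T ⊆ F)
    (a b : Om I S Q) (hab : ∀ i, i ∉ T → a.1 i = b.1 i) :
    shear F (fun _ => swap (res F a) (res F b)) ∈ H := by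
  have one : ∀ T : Finset I, T ⊆ F → T.card ≤ 3 → ∀ a b : Om I S Q,
      (∀ i, i ∉ T → a.1 i = b.1 i) → shear F (fun _ => swap (res F a) (res F b)) ∈ H := by
    intro T hT hc a b hab
    obtain ⟨E, h1, h2, h3⟩ := Finset.exists_subsuperset_card_eq hT hc hF
    exact swap_small H hH hS h3 h2 a b fun i hi => hab i fun h => hi (h1 h)
  induction T using Finset.induction_on generalizing b with
  | empty => exact one ∅ hT (by simp) a b hab
  | insert x T hx ih =>
    have m1 := ih (fun i hi => hT (Finset.mem_insert_of_mem hi)) (upd b x (a.1 x)) (by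
      intro i hi
      by_cases h : i = x
      · subst h; simp [upd]
      · simp only [upd, Function.update_of_ne h]
        exact hab i (by simp [h, hi]))
    have m2 := one {x} (fun i hi => hT (by simp at hi; simp [hi])) (by simp) (upd b x (a.1 x)) b (by
      intro i hi
      have : i ≠ x := by simpa using hi
      simp [upd, this])
    exact SubmonoidClass.swap_mem_trans
      (H.comap ((shear F).comp (Pi.constMonoidHom (RR S F) (Perm (BB S Q F))))) m1 m2

lemma Loc_le [Infinite I] [Nonempty S] (H : Subgroup (Perm (Om I S Q)))
    (hH : ∀ E : Finset I, E.card ≤ 5 → Loc E ⊆ (H : Set (Perm (Om I S Q))))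
    (hS : 2 ≤ Fintype.card S) {F : Finset I} (hF : 3 ≤ F.card) : Loc F ⊆ (H : Set (Perm (Om I S Q))) := by
  intro π hπ
  obtain ⟨g, rfl⟩ := Loc_eq_range F hπ
  change g ∈ (H.comap ((shear F).comp (Pi.constMonoidHom (RR S F) (Perm (BB S Q F)))))
  have : (⊤ : Subgroup (Perm (BB S Q F))) ≤
      H.comap ((shear F).comp (Pi.constMonoidHom (RR S F) (Perm (BB S Q F)))) := by
    rw [← Perm.closure_isSwap, Subgroup.closure_le]
    rintro _ ⟨p, q, -, rfl⟩
    obtain ⟨s⟩ := ‹Nonempty S›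
    have h := swap_all H hH hS hF F subset_rfl (glue F p (fun _ => s, p.2))
      (glue F q (fun _ => s, p.2)) (by intro i hi; simp [glue, hi])
    rw [res_glue, res_glue] at h
    exact h
  exact this trivial

end gen
end OBP

namespace OBP
open Equiv

set_option linter.unusedSectionVars false
section act
variable {I S Q : Type} [DecidableEq I]

def act : Perm I →* Perm (Om I S Q) where
  toFun ρ :=
    { toFun := fun w => (fun i => w.1 (ρ⁻¹ i), w.2)
      invFun := fun w => (fun i => w.1 (ρ i), w.2)
      left_inv := fun w => by simp
      right_inv := fun w => by simp }
  map_one' := by ext1 w; simp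
  map_mul' ρ ρ' := by ext1 w; simp

lemma act_apply (ρ : Perm I) (w : Om I S Q) : act ρ w = (fun i => w.1 (ρ⁻¹ i), w.2) := rfl
lemma act_inv_apply (ρ : Perm I) (w : Om I S Q) : (act ρ)⁻¹ w = (fun i => w.1 (ρ i), w.2) := rfl

lemma Loc_conj (E : Finset I) (ρ : Perm I) {π : Perm (Om I S Q)} (hπ : π ∈ Loc E) :
    act ρ * π * (act ρ)⁻¹ ∈ (Loc (E.image ρ) : Set (Perm (Om I S Q))) := by
  obtain ⟨h1, h2⟩ := hπ
  refine ⟨fun w i hi => ?_, fun w w' h => ?_⟩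
  · simp only [Perm.mul_apply, act_apply]
    rw [h1 _ _ (fun h => hi (by rw [Finset.mem_image]; exact ⟨_, h, by simp⟩))]
    simp [act_inv_apply]
  · have := h2 ((act ρ)⁻¹ w) ((act ρ)⁻¹ w') (by
      simp only [res, act_inv_apply, Prod.mk.injEq, funext_iff, Subtype.forall] at h ⊢
      exact ⟨fun i hi => h.1 _ (Finset.mem_image_of_mem _ hi), h.2⟩)
    simp only [Perm.mul_apply]
    simp only [res, act_apply, Prod.mk.injEq, funext_iff, Subtype.forall] at this ⊢
    refine ⟨fun i hi => this.1 _ ?_, this.2⟩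
    obtain ⟨j, hj, rfl⟩ := Finset.mem_image.1 hi
    simpa using hj

lemma act_swap_mem (E : Finset I) {i j : I} (hi : i ∈ E) (hj : j ∈ E) :
    act (swap i j) ∈ (Loc E : Set (Perm (Om I S Q))) := by
  refine ⟨fun w x hx => ?_, fun w w' h => ?_⟩
  · have h1 : x ≠ i := fun h => hx (h ▸ hi)
    have h2 : x ≠ j := fun h => hx (h ▸ hj)
    simp [act_apply, swap_apply_of_ne_of_ne h1 h2]
  · simp only [res, act_apply, Prod.mk.injEq, funext_iff, Subtype.forall, swap_inv] at h ⊢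
    refine ⟨fun x hx => h.1 _ ?_, h.2⟩
    rw [swap_apply_def]; split_ifs <;> assumption

lemma spread (H : Subgroup (Perm (Om I S Q))) (hsw : ∀ i j : I, act (swap i j) ∈ H)
    (E₀ : Finset I) (h₀ : Loc E₀ ⊆ (H : Set (Perm (Om I S Q)))) (m : ℕ) :
    ∀ E : Finset I, E.card = E₀.card → (E \ E₀).card = m →
      Loc E ⊆ (H : Set (Perm (Om I S Q))) := by
  induction m using Nat.strong_induction_on with
  | _ m ih =>
    intro E hE hm
    by_cases hs : E ⊆ E₀
    · rw [Finset.eq_of_subset_of_card_le hs hE.ge]; exact h₀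
    have hs' : ¬ E₀ ⊆ E := fun h => hs (Finset.eq_of_subset_of_card_le h hE.le).symm.subset
    obtain ⟨j, hjE, hj0⟩ := Finset.not_subset.1 hs
    obtain ⟨i, hi0, hiE⟩ := Finset.not_subset.1 hs'
    intro π hπ
    have hlt : ((E.image (swap i j)) \ E₀).card < m := by
      rw [← hm]
      apply Finset.card_lt_card
      rw [Finset.ssubset_iff_of_subset]
      · refine ⟨j, by simp [hjE, hj0], ?_⟩
        intro h
        obtain ⟨z, hz, hzj⟩ := Finset.mem_image.1 (Finset.mem_sdiff.1 h).1
        have : z = i := by rw [swap_apply_eq_iff] at hzj; simpa using hzj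
        exact hiE (this ▸ hz)
      · intro y hy
        obtain ⟨hy1, hy2⟩ := Finset.mem_sdiff.1 hy
        obtain ⟨z, hz, rfl⟩ := Finset.mem_image.1 hy1
        have hzi : z ≠ i := fun h => hiE (h ▸ hz)
        by_cases hzj : z = j
        · subst hzj; simp [hi0] at hy2
        · rw [swap_apply_of_ne_of_ne hzi hzj] at hy2 ⊢
          simp [hz, hy2]
    have := ih _ hlt (E.image (swap i j))
      (by rw [Finset.card_image_of_injective _ (swap i j).injective, hE]) rfl
      (Loc_conj E (swap i j) hπ)
    have h2 := hsw i j
    have h3 := H.mul_mem (H.mul_mem (H.inv_mem h2) this) h2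
    simpa [mul_assoc] using h3

lemma Loc_finite [Fintype S] [Fintype Q] [Nonempty S] (E : Finset I) :
    (Loc E : Set (Perm (Om I S Q))).Finite := by
  refine (Set.finite_range (fun g : Perm (BB S Q E) => (shear E (fun _ => g)))).subset ?_
  intro π hπ
  obtain ⟨g, rfl⟩ := Loc_eq_range E hπ
  exact ⟨g, rfl⟩

lemma Loc_inv [Fintype S] [Fintype Q] [Nonempty S] (E : Finset I) {π : Perm (Om I S Q)}
    (hπ : π ∈ Loc E) : π⁻¹ ∈ (Loc E : Set (Perm (Om I S Q))) := by
  obtain ⟨g, rfl⟩ := Loc_eq_range E hπ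
  rw [← map_inv]
  exact shear_const_mem E g⁻¹

end act

section conc
variable {d n k : ℕ}

abbrev OmX (d n k : ℕ) := Om (V d) (Fin n) (Fin k)

def mk : (V d → Fin n) ⊕ (V d × OmX d n k) → X d n k
  | Sum.inl x => ⟨(x, fun _ => none), by intro u v h; simp at h⟩
  | Sum.inr (v, w) => ⟨(fun t => w.1 (t - v), fun t => if t = v then some w.2 else none), by
      intro a b ha hb
      simp only at ha hb
      split_ifs at ha hb with h1 h2
      · rw [h1, h2]
      all_goals simp_all⟩

lemma mk_bij : Function.Bijective (mk (d := d) (n := n) (k := k)) := by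
  constructor
  · rintro (x | ⟨v, w⟩) (x' | ⟨v', w'⟩) h
    · have h := Prod.ext_iff.1 (Subtype.ext_iff.1 h); simp only [mk] at h; rw [h.1]
    · have h := Prod.ext_iff.1 (Subtype.ext_iff.1 h); simp only [mk] at h
      have := congrFun h.2 v'; simp at this
    · have h := Prod.ext_iff.1 (Subtype.ext_iff.1 h); simp only [mk] at h
      have := congrFun h.2 v; simp at this
    · have h := Prod.ext_iff.1 (Subtype.ext_iff.1 h); simp only [mk] at h
      obtain ⟨h1, h2⟩ := h
      have h3 := congrFun h2 v
      simp only [if_true] at h3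
      split_ifs at h3 with hv
      subst hv
      have h4 : w.1 = w'.1 := by
        ext1 t; simpa using congrFun h1 (t + v)
      have h5 : w.2 = w'.2 := by simpa using h3
      rw [Prod.ext h4 h5]
  · intro c
    by_cases h : ∃ v q, c.1.2 v = some q
    · obtain ⟨v, q, h⟩ := h
      refine ⟨Sum.inr (v, (fun t => c.1.1 (t + v), q)), ?_⟩
      apply Subtype.ext
      simp only [mk]
      apply Prod.ext
      · ext1 t; simp
      · ext1 t
        simp only
        split_ifs with ht
        · rw [ht, h]
        · by_contra hh
          apply ht
          apply c.2 t v
          · rw [Option.isSome_iff_ne_none]; exact fun h => hh h.symm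
          · simp [h]
    · refine ⟨Sum.inl c.1.1, ?_⟩
      apply Subtype.ext
      simp only [mk]
      apply Prod.ext
      · rfl
      · ext1 t
        simp only
        by_contra hh
        exact h ⟨t, Option.ne_none_iff_exists'.1 (fun h => hh h.symm)⟩

noncomputable def eX (d n k : ℕ) : (V d → Fin n) ⊕ (V d × OmX d n k) ≃ X d n k :=
  Equiv.ofBijective mk mk_bij

noncomputable def Phi (d n k : ℕ) : Perm (OmX d n k) →* Perm (X d n k) where
  toFun π := ((eX d n k).symm.trans
    (Equiv.sumCongr (Equiv.refl _) (Equiv.prodCongr (Equiv.refl _) π))).trans (eX d n k)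
  map_one' := by
    ext1 c
    obtain ⟨x, rfl⟩ := (eX d n k).surjective c
    rcases x with x | ⟨v, w⟩ <;> simp
  map_mul' π π' := by
    ext1 c
    obtain ⟨x, rfl⟩ := (eX d n k).surjective c
    rcases x with x | ⟨v, w⟩ <;> simp

lemma Phi_inl (π : Perm (OmX d n k)) (x : V d → Fin n) :
    Phi d n k π (mk (Sum.inl x)) = mk (Sum.inl x) := by
  change Phi d n k π (eX d n k (Sum.inl x)) = eX d n k (Sum.inl x)
  simp [Phi]

lemma Phi_inr (π : Perm (OmX d n k)) (v : V d) (w : OmX d n k) :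
    Phi d n k π (mk (Sum.inr (v, w))) = mk (Sum.inr (v, π w)) := by
  change Phi d n k π (eX d n k (Sum.inr (v, w))) = eX d n k (Sum.inr (v, π w))
  simp [Phi]

def Tsh (u : V d) : Perm (X d n k) where
  toFun c := ⟨(c.1.1, fun t => c.1.2 (t - u)), fun a b ha hb => by
    have := c.2 _ _ ha hb; simpa using this⟩
  invFun c := ⟨(c.1.1, fun t => c.1.2 (t + u)), fun a b ha hb => by
    have := c.2 _ _ ha hb; simpa using this⟩
  left_inv c := by simp
  right_inv c := by simp

lemma Tsh_add (u v : V d) : (Tsh (u + v) : Perm (X d n k)) = Tsh u * Tsh v := by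
  ext1 c
  apply Subtype.ext
  simp [Tsh, sub_sub]

lemma Tsh_zero : (Tsh 0 : Perm (X d n k)) = 1 := by
  ext1 c
  apply Subtype.ext
  simp [Tsh]

lemma Tsh_neg (u : V d) : (Tsh (-u) : Perm (X d n k)) = (Tsh u)⁻¹ := by
  rw [eq_inv_iff_mul_eq_one, ← Tsh_add, neg_add_cancel, Tsh_zero]

lemma Tsh_inl (u : V d) (x : V d → Fin n) :
    Tsh u (mk (k := k) (Sum.inl x)) = mk (Sum.inl x) := rfl

lemma Tsh_inr (u v : V d) (w : OmX d n k) :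
    Tsh u (mk (Sum.inr (v, w))) = mk (Sum.inr (v + u, act (Equiv.subRight u) w)) := by
  apply Subtype.ext
  apply Prod.ext
  · ext1 t
    simp only [Tsh, mk, act_apply, Equiv.coe_fn_mk]
    have : (Equiv.subRight u)⁻¹ (t - (v + u)) = t - v := by
      change t - (v + u) + u = t - v
      abel
    rw [this]
  · ext1 t
    simp [Tsh, mk, act_apply, sub_eq_iff_eq_add]

lemma Tsh_conj (u : V d) (π : Perm (OmX d n k)) :
    Tsh u * Phi d n k π * (Tsh u)⁻¹ =
      Phi d n k (act (Equiv.subRight u) * π * (act (Equiv.subRight u))⁻¹) := by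
  rw [mul_inv_eq_iff_eq_mul]
  ext1 c
  obtain ⟨x, rfl⟩ := mk_bij.2 c
  rcases x with x | ⟨v, w⟩
  · simp only [Perm.mul_apply, Phi_inl, Tsh_inl]
  · simp only [Perm.mul_apply, Phi_inr, Tsh_inr]
    rw [← Perm.mul_apply _⁻¹, inv_mul_cancel, Perm.one_apply]

lemma shift_mem (u : V d) : Tsh u ∈ Shiftset d n k := ⟨u, fun _ => ⟨rfl, fun _ => rfl⟩⟩

lemma shift_eq {π : Perm (X d n k)} (h : π ∈ Shiftset d n k) : ∃ u, π = Tsh u := by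
  obtain ⟨u, hu⟩ := h
  refine ⟨u, ?_⟩
  ext1 c
  apply Subtype.ext
  exact Prod.ext (hu c).1 (funext (hu c).2)

lemma head_eq {c : X d n k} {v : V d} {q : Fin k} (h : c.1.2 v = some q) :
    c = mk (Sum.inr (v, (fun t => c.1.1 (t + v), q))) := by
  obtain ⟨x, rfl⟩ := mk_bij.2 c
  rcases x with x | ⟨v', w⟩
  · simp [mk] at h
  · simp only [mk] at h
    split_ifs at h with hv
    subst hv
    simp only [Option.some.injEq] at h
    subst h
    congr 3
    ext1
    · ext1 t; simp [mk]
    · rfl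

lemma nohead_eq {c : X d n k} (h : ∀ v, c.1.2 v = none) : c = mk (Sum.inl c.1.1) := by
  apply Subtype.ext
  exact Prod.ext rfl (funext h)

lemma Phi_isTM {E : Finset (V d)} {π : Perm (OmX d n k)} (h : π ∈ Loc E) :
    IsTM (⇑(Phi d n k π)) := by
  refine ⟨E, E, fun x q => ((π (x, q)).1, (π (x, q)).2, 0), ?_, ?_, ?_⟩
  · intro x x' q hx
    have := h.2 (x, q) (x', q) (by
      ext i
      · simp [res, hx i.1 i.2]
      · rfl)
    simp only [res, Prod.mk.injEq, funext_iff, Subtype.forall] at this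
    exact ⟨this.1, by simp only [this.2]⟩
  · intro c hc
    rw [nohead_eq hc, Phi_inl]
  · intro c v q hc
    have e := head_eq hc
    generalize hw : (fun t => c.1.1 (t + v)) = y at *
    subst e
    rw [Phi_inr]
    constructor
    · intro t
      simp only [mk]
      split_ifs with ht
      · rfl
      · exact h.1 _ _ ht
    · intro t
      simp [mk]

lemma Phi_mem_LP [Nonempty (Fin n)] {E : Finset (V d)} {π : Perm (OmX d n k)} (h : π ∈ Loc E) :
    Phi d n k π ∈ LPset d n k := by
  refine ⟨⟨Phi_isTM h, ?_⟩, ?_⟩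
  · have := Phi_isTM (Loc_inv E h)
    rw [map_inv] at this
    exact this
  · intro c v
    obtain ⟨x, rfl⟩ := mk_bij.2 c
    rcases x with x | ⟨v', w⟩
    · rw [Phi_inl]
    · rw [Phi_inr]
      simp only [mk]
      split_ifs <;> rfl

lemma TM_rule {T : X d n k → X d n k} (hT : IsTM T)
    (hh : ∀ (c : X d n k) (v : V d), ((T c).val.2 v).isSome = (c.val.2 v).isSome) :
    ∃ (E : Finset (V d)) (P : OmX d n k → OmX d n k),
      (∀ w, ∀ i ∉ E, (P w).1 i = w.1 i) ∧
      (∀ w w', res E w = res E w' → res E (P w) = res E (P w')) ∧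
      (∀ x, T (mk (Sum.inl x)) = mk (Sum.inl x)) ∧
      ∀ v w, T (mk (Sum.inr (v, w))) = mk (Sum.inr (v, P w)) := by
  obtain ⟨F, F', f, h1, h2, h3⟩ := hT
  refine ⟨F ∪ F', fun w => (fun t => if t ∈ F' then (f w.1 w.2).1 t else w.1 t, (f w.1 w.2).2.1),
    ?_, ?_, ?_, ?_⟩
  · intro w i hi
    have : i ∉ F' := fun h => hi (Finset.mem_union_right _ h)
    simp [this]
  · intro w w' h
    simp only [res, Prod.mk.injEq, funext_iff, Subtype.forall] at h ⊢
    obtain ⟨ha, hb⟩ := h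
    have := h1 w.1 w'.1 w.2 (fun v hv => ha v (Finset.mem_union_left _ hv))
    rw [← hb]
    refine ⟨fun i hi => ?_, by rw [this.2]⟩
    split_ifs with hi'
    · exact this.1 i hi'
    · exact ha i hi
  · intro x
    exact h2 _ fun v => rfl
  · intro v w
    have hv : (mk (Sum.inr (v, w))).1.2 v = some w.2 := by simp [mk]
    have hw : (fun u => (mk (Sum.inr (v, w))).1.1 (u + v)) = w.1 := by ext1 u; simp [mk]
    obtain ⟨ha, hb⟩ := h3 _ v w.2 hv
    rw [hw] at ha hb
    have h0 : v = v + (f w.1 w.2).2.2 := by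
      have := hh (mk (Sum.inr (v, w))) v
      rw [hb, hv] at this
      by_contra hne
      rw [if_neg hne] at this
      simp at this
    rw [← h0] at hb
    apply Subtype.ext
    apply Prod.ext
    · ext1 t
      rw [ha t]
      simp only [mk]
    · ext1 t
      rw [hb t]
      simp only [mk]

lemma LP_eq {π : Perm (X d n k)} (h : π ∈ LPset d n k) :
    ∃ (E : Finset (V d)) (π' : Perm (OmX d n k)), π' ∈ Loc E ∧ π = Phi d n k π' := by
  obtain ⟨⟨h1, h2⟩, h3⟩ := h
  obtain ⟨E, P, p1, p2, p3, p4⟩ := TM_rule h1 h3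
  obtain ⟨E', P', -, -, -, p4'⟩ := TM_rule h2 (fun c v => by
    have := h3 (π.symm c) v
    rw [Equiv.apply_symm_apply] at this
    exact this.symm)
  refine ⟨E, ⟨P, P', fun w => ?_, fun w => ?_⟩, ⟨p1, p2⟩, ?_⟩
  · have := p4' 0 (P w)
    rw [← p4, Equiv.symm_apply_apply] at this
    have := mk_bij.1 this
    simpa using this.symm
  · have := p4 0 (P' w)
    rw [← p4', Equiv.apply_symm_apply] at this
    have := mk_bij.1 this
    simpa using this.symm
  · ext1 c
    obtain ⟨x, rfl⟩ := mk_bij.2 c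
    rcases x with x | ⟨v, w⟩
    · rw [Phi_inl, p3]
    · rw [Phi_inr, p4]; rfl

lemma addSubgroup_top (A : AddSubgroup (V d)) (h : ∀ i, Pi.single i 1 ∈ A) (u : V d) : u ∈ A := by
  rw [← Finset.univ_sum_single u]
  refine A.sum_mem fun i _ => ?_
  have : (Pi.single i (u i) : V d) = u i • Pi.single i 1 := by
    ext j; by_cases hj : j = i
    · subst hj; simp
    · simp [hj]
  rw [this]
  exact A.zsmul_mem (h i) _

end conc
end OBP

open OBP in
/-- The group `OB(ℤ^d,n,k)` of oblivious Turing machines is finitely generated. -/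
theorem ob_finitelyGenerated (d n k : ℕ) (hd : 1 ≤ d) (hn : 1 ≤ n) (hk : 1 ≤ k) :
    (OBgrp d n k).FG := by
  have : Nonempty (Fin n) := ⟨⟨0, hn⟩⟩
  have : Nonempty (Fin d) := ⟨⟨0, hd⟩⟩
  have : Infinite (V d) := inferInstance
  obtain ⟨E₀, hE1, hE2⟩ : ∃ E₀ : Finset (V d),
      insert 0 (Finset.univ.image fun i => (Pi.single i 1 : V d)) ⊆ E₀ ∧ 5 ≤ E₀.card := by
    obtain ⟨B, h1, h2⟩ := Infinite.exists_superset_card_eq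
      (insert 0 (Finset.univ.image fun i => (Pi.single i 1 : V d))) (_ + 5) (Nat.le_add_right _ 5)
    exact ⟨B, h1, by omega⟩
  rw [Subgroup.fg_iff]
  refine ⟨(Set.range fun i => Tsh (Pi.single i 1 : V d)) ∪ Phi d n k '' (Loc E₀), ?_,
    (Set.finite_range _).union ((Loc_finite E₀).image _)⟩
  set G := Subgroup.closure ((Set.range fun i => Tsh (Pi.single i 1 : V d)) ∪
    Phi d n k '' (Loc E₀)) with hG
  apply le_antisymm
  · rw [hG, Subgroup.closure_le]
    rintro _ (⟨i, rfl⟩ | ⟨π, hπ, rfl⟩)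
    · exact Subgroup.subset_closure (Or.inl (shift_mem _))
    · exact Subgroup.subset_closure (Or.inr (Phi_mem_LP hπ))
  have hT : ∀ u : V d, Tsh u ∈ G := by
    let A : AddSubgroup (V d) :=
      { carrier := {u | Tsh u ∈ G}
        zero_mem' := by
          change Tsh 0 ∈ G
          rw [Tsh_zero]; exact G.one_mem
        add_mem' := fun {a b} ha hb => by
          change Tsh (a + b) ∈ G
          rw [Tsh_add]; exact G.mul_mem ha hb
        neg_mem' := fun {a} ha => by
          change Tsh (-a) ∈ G
          rw [Tsh_neg]; exact G.inv_mem ha }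
    exact fun u => addSubgroup_top A (fun i => Subgroup.subset_closure (Or.inl ⟨i, rfl⟩)) u
  let H := G.comap (Phi d n k)
  have h0 : Loc E₀ ⊆ (H : Set (Equiv.Perm (OmX d n k))) := fun π hπ =>
    Subgroup.subset_closure (Or.inr ⟨π, hπ, rfl⟩)
  have hconj : ∀ (u : V d) (π : Equiv.Perm (OmX d n k)), π ∈ H →
      act (Equiv.subRight u) * π * (act (Equiv.subRight u))⁻¹ ∈ H := by
    intro u π hπ
    change Phi d n k _ ∈ G
    rw [← Tsh_conj]
    exact G.mul_mem (G.mul_mem (hT u) hπ) (G.inv_mem (hT u))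
  have hsw : ∀ i j : V d, act (Equiv.swap i j) ∈ H := by
    let A : AddSubgroup (V d) :=
      { carrier := {u | ∀ v, act (Equiv.swap v (v + u)) ∈ H}
        zero_mem' := by
          intro v
          rw [add_zero, Equiv.swap_self]
          change act 1 ∈ H
          rw [map_one]; exact H.one_mem
        add_mem' := fun {a b} ha hb v => by
          have h2 := hb (v + a)
          rw [add_assoc] at h2
          exact SubmonoidClass.swap_mem_trans (H.comap act) (ha v) h2
        neg_mem' := fun {a} ha v => by
          have := ha (v + -a)
          rw [Equiv.swap_comm] at this
          simpa using this }
    have hA : ∀ u, u ∈ A := addSubgroup_top A (fun i v => by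
      have h1 : act (Equiv.swap (0 : V d) (Pi.single i 1)) ∈ H :=
        h0 (act_swap_mem E₀ (hE1 (by simp)) (hE1 (by simp)))
      have h2 := hconj (-v) _ h1
      rw [← map_inv, ← map_mul, ← map_mul, ← Equiv.swap_apply_apply] at h2
      simpa [add_comm] using h2)
    intro i j
    have := hA (j - i) i
    simpa using this
  have h5 : ∀ E : Finset (V d), E.card ≤ E₀.card →
      Loc E ⊆ (H : Set (Equiv.Perm (OmX d n k))) := by
    intro E hE
    obtain ⟨E', h1, h2⟩ := Infinite.exists_superset_card_eq E _ hE
    exact (Loc_mono h1).trans (spread H hsw E₀ h0 _ E' h2 rfl)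
  have hall : ∀ E : Finset (V d), Loc E ⊆ (H : Set (Equiv.Perm (OmX d n k))) := by
    intro E
    by_cases hn2 : 2 ≤ n
    · refine (Loc_mono (Finset.subset_union_left (s₂ := E₀))).trans
        (Loc_le H (fun E hE => h5 E (hE.trans hE2)) (by simpa using hn2) ?_)
      have := Finset.card_le_card (Finset.subset_union_right (s₁ := E) (s₂ := E₀))
      omega
    · have hn1 : n = 1 := by omega
      subst hn1
      refine Set.Subset.trans (fun π hπ => ?_) (h5 ∅ (by simp))
      refine ⟨fun w i _ => Subsingleton.elim _ _, fun w w' h => ?_⟩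
      have : w = w' := Prod.ext (Subsingleton.elim _ _) (congrArg (fun b : BB (Fin 1) (Fin k) (∅ : Finset (V d)) => b.2) h)
      rw [this]
  rw [OBgrp, Subgroup.closure_le]
  rintro π (hπ | hπ)
  · obtain ⟨u, rfl⟩ := shift_eq hπ
    exact hT u
  · obtain ⟨E, π', h1, rfl⟩ := LP_eq hπ
    exact hall E h1
end

section
/- Let d, k ≥ 1 and n ≥ 2. For every m ∈ ℕ, the free product ℤ/2ℤ ∗ ⋯ ∗ ℤ/2ℤ of m copies of ℤ/2ℤ embeds into RFA(ℤ^d,n,k). -/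
open Function

namespace FPZ

/-- Edge of colour `i` from `v` to `v + m`. -/
def E {d n m : ℕ} (i : Fin m) (x : V d → Fin n) (v : V d) : Prop :=
  (x (v + ((i : ℕ) : V d))).val = 1 ∧ (x (v + ((i : ℕ) : V d) - (m : V d))).val ≠ 1 ∧
    (x (v + ((i : ℕ) : V d) + (m : V d))).val ≠ 1

open Classical in
/-- The position involution. -/
noncomputable def sg {d n m : ℕ} (i : Fin m) (x : V d → Fin n) (v : V d) : V d :=
  if E i x v then v + (m : V d) else if E i x (v - (m : V d)) then v - (m : V d) else v

lemma sg_invol {d n m : ℕ} (i : Fin m) (x : V d → Fin n) : Involutive (sg i x) := by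
  intro v
  have key : ∀ w, E i x w → ¬ E i x (w + (m : V d)) := by
    rintro w ⟨h1, h2, h3⟩ ⟨h4, h5, h6⟩
    apply h3
    rw [← h4]; congr 2; ring
  by_cases h : E i x v
  · have h1 : sg i x v = v + (m : V d) := by simp [sg, h]
    rw [h1]
    simp [sg, key v h, h]
  · by_cases h' : E i x (v - (m : V d))
    · have h1 : sg i x v = v - (m : V d) := by simp [sg, h, h']
      rw [h1]
      simp [sg, h']
    · have h1 : sg i x v = v := by simp [sg, h, h']
      rw [h1, h1]

/-- The machine. -/
noncomputable def tm {d n m : ℕ} (k : ℕ) (i : Fin m) (c : X d n k) : X d n k :=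
  ⟨(c.val.1, fun t => c.val.2 (sg i c.val.1 t)), fun _ _ hu hv =>
    (sg_invol i c.val.1).injective (c.property _ _ hu hv)⟩

lemma tm_invol {d n m : ℕ} (k : ℕ) (i : Fin m) : Involutive (tm (d := d) (n := n) k i) := by
  intro c
  apply Subtype.ext
  refine Prod.ext rfl ?_
  funext t
  simp only [tm]
  rw [sg_invol i c.val.1 t]

lemma E_shift {d n m : ℕ} (i : Fin m) (x : V d → Fin n) (v w : V d) :
    E i (fun u => x (u + v)) w ↔ E i x (w + v) := by
  have h1 : w + ((i : ℕ) : V d) + v = w + v + ((i : ℕ) : V d) := by ring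
  have h2 : w + ((i : ℕ) : V d) - (m : V d) + v = w + v + ((i : ℕ) : V d) - (m : V d) := by ring
  have h3 : w + ((i : ℕ) : V d) + (m : V d) + v = w + v + ((i : ℕ) : V d) + (m : V d) := by ring
  unfold E
  simp only [h1, h2, h3]

lemma sg_shift {d n m : ℕ} (i : Fin m) (x : V d → Fin n) (v : V d) :
    v + sg i (fun u => x (u + v)) 0 = sg i x v := by
  have h : (0 : V d) - (m : V d) + v = v - (m : V d) := by ring
  have h1 := E_shift i x v 0
  have h2 := E_shift i x v (0 - (m : V d))
  rw [h] at h2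
  rw [zero_add] at h1
  unfold sg
  by_cases a : E i x v
  · rw [if_pos (h1.mpr a), if_pos a]; ring
  · rw [if_neg (fun b => a (h1.mp b)), if_neg a]
    by_cases a' : E i x (v - (m : V d))
    · rw [if_pos (h2.mpr a'), if_pos a']; ring
    · rw [if_neg (fun b => a' (h2.mp b)), if_neg a']; ring

lemma tm_isTM {d n m : ℕ} (k : ℕ) (i : Fin m) : IsTM (tm (d := d) (n := n) k i) := by
  classical
  refine ⟨{((i : ℕ) : V d), ((i : ℕ) : V d) - (m : V d), ((i : ℕ) : V d) + (m : V d),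
    ((i : ℕ) : V d) - (m : V d) - (m : V d)}, ∅, fun x q => (x, q, sg i x 0), ?_, ?_, ?_⟩
  · intro x x' q h
    refine ⟨by simp, ?_⟩
    simp only [Finset.mem_insert, Finset.mem_singleton, forall_eq_or_imp, forall_eq] at h
    obtain ⟨h1, h2, h3, h4⟩ := h
    have e1 : (0 : V d) - (m : V d) + ((i : ℕ) : V d) = ((i : ℕ) : V d) - (m : V d) := by ring
    have e2 : ((i : ℕ) : V d) - (m : V d) + (m : V d) = ((i : ℕ) : V d) := by ring
    have : sg i x 0 = sg i x' 0 := by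
      unfold sg E
      simp only [zero_add, e1, e2, h1, h2, h3, h4]
    simp [this]
  · intro c hc
    apply Subtype.ext
    refine Prod.ext rfl ?_
    funext t
    simp [tm, hc]
  · intro c v q hq
    refine ⟨by simp [tm], ?_⟩
    intro t
    simp only [sg_shift]
    by_cases ht : t = sg i c.val.1 v
    · subst ht
      simp [tm, sg_invol i c.val.1 v, hq]
    · rw [if_neg ht]
      by_contra hne
      have h1 : (c.val.2 (sg i c.val.1 t)).isSome := by
        rw [Option.isSome_iff_ne_none]
        exact hne
      have := c.property _ v h1 (by simp [hq])
      exact ht (by rw [← this, sg_invol i c.val.1 t])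

/-- The permutation. -/
noncomputable def pm {d n m : ℕ} (k : ℕ) (i : Fin m) : Equiv.Perm (X d n k) :=
  (tm_invol k i).toPerm

lemma pm_mem {d n m : ℕ} (k : ℕ) (i : Fin m) : pm (d := d) (n := n) k i ∈ RFAgrp d n k :=
  Subgroup.subset_closure ⟨⟨tm_isTM k i, tm_isTM k i⟩, fun _ => rfl⟩

lemma pm_sq {d n m : ℕ} (k : ℕ) (i : Fin m) :
    pm (d := d) (n := n) k i * pm (d := d) (n := n) k i = 1 :=
  Equiv.ext (tm_invol k i)

lemma z2_cases : ∀ g : Multiplicative (ZMod 2), g = 1 ∨ g = Multiplicative.ofAdd 1 := by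
  decide

/-- Hom out of `ℤ/2`. -/
noncomputable def z2hom {G : Type*} [Group G] (a : G) (ha : a * a = 1) :
    Multiplicative (ZMod 2) →* G where
  toFun g := if g = 1 then 1 else a
  map_one' := by simp
  map_mul' x y := by
    have h0 : (Multiplicative.ofAdd (1 : ZMod 2)) ≠ 1 := by decide
    have h1 : (Multiplicative.ofAdd (1 : ZMod 2)) * Multiplicative.ofAdd 1 = 1 := by decide
    rcases z2_cases x with rfl | rfl <;> rcases z2_cases y with rfl | rfl <;>
      simp [h0, h1, ha]

/-- The homomorphism. -/
noncomputable def phi (d n k m : ℕ) :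
    Monoid.CoprodI (fun _ : Fin m => Multiplicative (ZMod 2)) →* RFAgrp d n k :=
  Monoid.CoprodI.lift fun i => z2hom (⟨pm k i, pm_mem k i⟩ : RFAgrp d n k)
    (Subtype.ext (pm_sq k i))

lemma phi_prod {d n k m : ℕ} (L : List (Σ _ : Fin m, Multiplicative (ZMod 2)))
    (hL : ∀ l ∈ L, l.2 ≠ 1) :
    ((phi d n k m (L.map fun l => (Monoid.CoprodI.of (i := l.1) l.2 :
      Monoid.CoprodI (fun _ : Fin m => Multiplicative (ZMod 2)))).prod : RFAgrp d n k) :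
      Equiv.Perm (X d n k)) = ((L.map Sigma.fst).map (pm k)).prod := by
  induction L with
  | nil => simp
  | cons a L ih =>
    have h1 : a.2 ≠ 1 := hL a (by simp)
    have h2 := ih fun l hl => hL l (by simp [hl])
    simp only [List.map_cons, List.prod_cons, map_mul, Subgroup.coe_mul, h2]
    congr 1
    simp [phi, z2hom, h1]

lemma prod_apply {d n k m : ℕ} (l : List (Fin m)) (c : X d n k) :
    ((l.map (pm k)).prod c).val.1 = c.val.1 ∧
    ∀ t, ((l.map (pm k)).prod c).val.2 t =
      c.val.2 (l.foldl (fun t i => sg i c.val.1 t) t) := by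
  induction l with
  | nil => simp
  | cons a l ih =>
    obtain ⟨h1, h2⟩ := ih
    simp only [List.map_cons, List.prod_cons, Equiv.Perm.mul_apply, List.foldl_cons]
    refine ⟨h1, fun t => ?_⟩
    rw [← h1, ← h1] at *
    change ((l.map (pm k)).prod c).val.2 (sg a ((l.map (pm k)).prod c).val.1 t) = _
    rw [h2]

open Classical in
/-- The tape for a word. -/
noncomputable def tape {d n m : ℕ} (hd : 1 ≤ d) (hn : 2 ≤ n) (l : List (Fin m)) (v : V d) : Fin n :=
  if ∃ (t : ℕ) (h : t < l.length), v ⟨0, hd⟩ = t * m + (l[t] : ℕ) then ⟨1, hn⟩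
    else ⟨0, by omega⟩

lemma tape_one {d n m : ℕ} (hd : 1 ≤ d) (hn : 2 ≤ n) (l : List (Fin m)) (v : V d) :
    (tape hd hn l v).val = 1 ↔
      ∃ (t : ℕ) (h : t < l.length), v ⟨0, hd⟩ = t * m + (l[t] : ℕ) := by
  unfold tape
  split_ifs with h <;> simp [h]

lemma uniq {m : ℕ} (a b : ℤ) (i j : Fin m) (h : a * m + (i : ℕ) = b * m + (j : ℕ)) :
    a = b ∧ i = j := by
  have hi : ((i : ℕ) : ℤ) < m := by exact_mod_cast i.2
  have hj : ((j : ℕ) : ℤ) < m := by exact_mod_cast j.2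
  have hab : a = b := by
    rcases lt_trichotomy a b with hh | hh | hh
    · nlinarith
    · exact hh
    · nlinarith
  subst hab
  exact ⟨rfl, Fin.ext (by omega)⟩

lemma sg_tape {d n m : ℕ} (hd : 1 ≤ d) (hn : 2 ≤ n) (l : List (Fin m))
    (hl : l.IsChain (· ≠ ·)) (t : ℕ) (ht : t < l.length) :
    sg l[t] (tape hd hn l) ((t * m : ℕ) : V d) = (((t + 1) * m : ℕ) : V d) := by
  have hE : E l[t] (tape hd hn l) ((t * m : ℕ) : V d) := by
    rw [List.isChain_iff_getElem] at hl
    refine ⟨?_, ?_, ?_⟩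
    · rw [tape_one]
      exact ⟨t, ht, by simp⟩
    · rw [Ne, tape_one]
      rintro ⟨s, hs, h⟩
      obtain ⟨h1, h2⟩ := uniq ((t : ℤ) - 1) s l[t] l[s] (by rw [← h]; simp; ring)
      obtain rfl : t = s + 1 := by omega
      exact hl s (by omega) h2.symm
    · rw [Ne, tape_one]
      rintro ⟨s, hs, h⟩
      obtain ⟨h1, h2⟩ := uniq ((t : ℤ) + 1) s l[t] l[s] (by rw [← h]; simp; ring)
      obtain rfl : s = t + 1 := by omega
      exact hl t (by omega) h2
  rw [sg, if_pos hE]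
  push_cast; ring

lemma fold_tape {d n m : ℕ} (hd : 1 ≤ d) (hn : 2 ≤ n) (l : List (Fin m))
    (hl : l.IsChain (· ≠ ·)) (t : ℕ) (ht : t ≤ l.length) :
    (l.take t).foldl (fun v i => sg i (tape hd hn l) v) 0 = ((t * m : ℕ) : V d) := by
  induction t with
  | zero => simp
  | succ t ih =>
    rw [List.take_succ_eq_append_getElem (by omega), List.foldl_append, ih (by omega)]
    exact sg_tape hd hn l hl t (by omega)

end FPZ

/-- For `n ≥ 2`, the free product of `m` copies of `ℤ/2ℤ` embeds into `RFA(ℤ^d,n,k)`. -/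
theorem freeProduct_z2_embeds_rfa (d n k : ℕ) (hd : 1 ≤ d) (hn : 2 ≤ n) (hk : 1 ≤ k) :
    ∀ m : ℕ, ∃ φ : Monoid.CoprodI (fun _ : Fin m => Multiplicative (ZMod 2)) →* RFAgrp d n k,
      Function.Injective ⇑φ := by
  intro m
  refine ⟨FPZ.phi d n k m, ?_⟩
  rw [injective_iff_map_eq_one]
  intro g hg
  classical
  obtain ⟨w, rfl⟩ : ∃ w : Monoid.CoprodI.Word (fun _ : Fin m => Multiplicative (ZMod 2)),
      w.prod = g := ⟨Monoid.CoprodI.Word.equiv g, Monoid.CoprodI.Word.equiv.symm_apply_apply g⟩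
  have h1 := FPZ.phi_prod (d := d) (n := n) (k := k) w.toList (fun l hl => w.ne_one l hl)
  change ((FPZ.phi d n k m w.prod : RFAgrp d n k) : Equiv.Perm (X d n k)) = _ at h1
  rw [hg] at h1
  set l := w.toList.map Sigma.fst with hldef
  have hl : l.IsChain (· ≠ ·) := by
    rw [hldef, List.isChain_map]
    exact w.chain_ne
  let c : X d n k := ⟨(FPZ.tape hd hn l, fun v => if v = 0 then some ⟨0, hk⟩ else none), by
    intro u v hu hv
    by_cases hu0 : u = 0 <;> by_cases hv0 : v = 0 <;> simp_all⟩
  have h2 := (FPZ.prod_apply (k := k) l c).2 0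
  rw [← h1] at h2
  have h3 := FPZ.fold_tape hd hn l hl l.length le_rfl
  rw [List.take_length] at h3
  change (if (0 : V d) = 0 then some (⟨0, hk⟩ : Fin k) else none) =
    if l.foldl (fun v i => FPZ.sg i (FPZ.tape hd hn l) v) 0 = 0 then some ⟨0, hk⟩ else none at h2
  rw [h3, if_pos rfl] at h2
  have h4 : ((l.length * m : ℕ) : V d) = 0 := by
    by_contra hne
    rw [if_neg hne] at h2
    exact absurd h2 (by simp)
  have h5 := congrFun h4 ⟨0, hd⟩
  have h6 : l.length * m = 0 := by
    rw [Pi.natCast_apply, Pi.zero_apply] at h5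
    exact_mod_cast h5
  have h7 : l = [] := by
    rcases Nat.mul_eq_zero.mp h6 with h | h
    · exact List.length_eq_zero_iff.mp h
    · subst h
      cases hh : l with
      | nil => rfl
      | cons a _ => exact a.elim0
  have h8 : w.toList = [] := List.map_eq_nil_iff.mp h7
  simp [Monoid.CoprodI.Word.prod, h8]
end

section
/- Let d, k ≥ 1 and n ≥ 2. The free group on two generators embeds into RFA(ℤ^d,n,k), and hence into RTM(ℤ^d,n,k); in particular, neither RFA(ℤ^d,n,k) nor RTM(ℤ^d,n,k) is amenable. -/
open Function

namespace RFAFree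

/-- unit vector times `a` -/
def ev (d : ℕ) (hd : 1 ≤ d) (a : ℤ) : V d := fun i => if i = ⟨0, hd⟩ then a else 0

lemma ev_add (d : ℕ) (hd : 1 ≤ d) (a b : ℤ) : ev d hd a + ev d hd b = ev d hd (a + b) := by
  funext i; simp only [ev, Pi.add_apply]; split_ifs <;> simp

lemma ev_zero (d : ℕ) (hd : 1 ≤ d) : ev d hd 0 = 0 := by
  funext i; simp [ev]

section
variable {d n k : ℕ} (hd : 1 ≤ d) (c : ℕ)

/-- edge from `v` to `v+4e` is active for colour `c` -/
def act (x : V d → Fin n) (v : V d) : Prop :=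
  (x (v + ev d hd c)).val ≠ 0 ∧ (x (v + ev d hd (c - 4))).val = 0 ∧
    (x (v + ev d hd (c + 4))).val = 0

open Classical in
noncomputable def mv (x : V d → Fin n) (v : V d) : ℤ :=
  if act hd c x v then 4 else if act hd c x (v + ev d hd (-4)) then -4 else 0

noncomputable def pos (x : V d → Fin n) (v : V d) : V d := v + ev d hd (mv hd c x v)

lemma act_next (x : V d → Fin n) (v : V d) (h : act hd c x v) :
    ¬ act hd c x (v + ev d hd 4) := by
  intro h'
  apply h.1
  have := h'.2.1
  rwa [add_assoc, ev_add, show (4 : ℤ) + (c - 4) = c by ring] at this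

lemma pos_of_act (x : V d → Fin n) (v : V d) (h : act hd c x v) :
    pos hd c x v = v + ev d hd 4 := by
  simp [pos, mv, h]

lemma pos_back (x : V d → Fin n) (v : V d) (h : act hd c x v) :
    pos hd c x (v + ev d hd 4) = v := by
  have h1 := act_next hd c x v h
  have h2 : v + ev d hd 4 + ev d hd (-4) = v := by
    rw [add_assoc, ev_add]; simp [ev_zero]
  simp [pos, mv, h1, h2, h]

lemma pos_invol (x : V d → Fin n) (v : V d) : pos hd c x (pos hd c x v) = v := by
  by_cases h : act hd c x v
  · rw [pos_of_act hd c x v h, pos_back hd c x v h]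
  · by_cases h' : act hd c x (v + ev d hd (-4))
    · have h2 : v + ev d hd (-4) + ev d hd 4 = v := by
        rw [add_assoc, ev_add]; simp [ev_zero]
      have := pos_back hd c x _ h'
      rw [h2] at this
      rw [this, pos_of_act hd c x _ h', h2]
    · have : pos hd c x v = v := by simp [pos, mv, h, h', ev_zero]
      rw [this, this]

noncomputable def sfun (a : X d n k) : X d n k :=
  ⟨(a.val.1, fun u => a.val.2 (pos hd c a.val.1 u)), by
    intro u v hu hv
    have := a.property _ _ hu hv
    have h := congrArg (pos hd c a.val.1) this
    simpa [pos_invol] using h⟩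

lemma sfun_invol : Function.Involutive (sfun (n := n) (k := k) hd c) := by
  intro a
  apply Subtype.ext
  simp [sfun, pos_invol]

noncomputable def s : Equiv.Perm (X d n k) := (sfun_invol hd c).toPerm

lemma act_shift (x : V d → Fin n) (v w : V d) :
    act hd c (fun u => x (u + v)) w ↔ act hd c x (v + w) := by
  simp only [act]
  have : ∀ z, w + z + v = v + w + z := by intro z; abel
  simp only [this]

lemma sfun_isTM : IsTM (sfun (n := n) (k := k) hd c) := by
  classical
  refine ⟨{ev d hd c, ev d hd (c - 4), ev d hd (c + 4), ev d hd (-4) + ev d hd c,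
    ev d hd (-4) + ev d hd (c - 4), ev d hd (-4) + ev d hd (c + 4)}, ∅,
    fun x q => (x, q, ev d hd (mv hd c x 0)), ?_, ?_, ?_⟩
  · intro x x' q h
    refine ⟨by simp, ?_⟩
    simp only [Finset.mem_insert, Finset.mem_singleton, forall_eq_or_imp, forall_eq] at h
    obtain ⟨h1, h2, h3, h4, h5, h6⟩ := h
    have e1 : act hd c x 0 ↔ act hd c x' 0 := by
      simp only [act, zero_add, h1, h2, h3]
    have e2 : act hd c x (0 + ev d hd (-4)) ↔ act hd c x' (0 + ev d hd (-4)) := by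
      simp only [act, zero_add, h4, h5, h6]
    simp only [mv, e1, e2]
  · intro a h
    apply Subtype.ext
    apply Prod.ext
    · rfl
    · funext u
      simp [sfun, h]
  · intro a v q h
    refine ⟨by simp [sfun], ?_⟩
    intro t
    have e : v + ev d hd (mv hd c (fun u => a.val.1 (u + v)) 0) = pos hd c a.val.1 v := by
      simp only [pos, mv, act_shift]
      simp only [add_zero, zero_add]
    simp only [e]
    split_ifs with ht
    · simp [sfun, ht, pos_invol, h]
    · by_contra hne
      apply ht
      have h1 : (a.val.2 (pos hd c a.val.1 t)).isSome := Option.isSome_iff_ne_none.mpr hne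
      have := a.property _ v h1 (by simp [h])
      rw [← this, pos_invol]

lemma s_mem : s (n := n) (k := k) hd c ∈ RFAset d n k :=
  ⟨⟨sfun_isTM hd c, sfun_isTM hd c⟩, fun _ => rfl⟩

open Classical in
noncomputable def tape (hn : 2 ≤ n) (l : List ℕ) : V d → Fin n := fun v =>
  if ∃ j b : ℕ, l[j]? = some b ∧ v ⟨0, hd⟩ = 4 * j + b then ⟨1, by omega⟩ else ⟨0, by omega⟩

open Classical in
noncomputable def cfg (hn : 2 ≤ n) (hk : 1 ≤ k) (l : List ℕ) (v : V d) : X d n k :=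
  ⟨(tape hd hn l, fun u => if u = v then some ⟨0, hk⟩ else none), by
    intro u w hu hw
    by_cases h1 : u = v <;> by_cases h2 : w = v <;> simp_all⟩

lemma tape_act (hn : 2 ≤ n) (l : List ℕ) (hl : ∀ b ∈ l, b < 4) (hc : l.IsChain (· ≠ ·))
    (j b : ℕ) (hj : l[j]? = some b) :
    act hd b (tape (n := n) hd hn l) (ev d hd (4 * j)) := by
  have hb : b < 4 := hl b (List.mem_of_getElem? hj)
  rw [List.isChain_iff_getElem] at hc
  refine ⟨?_, ?_, ?_⟩
  · rw [ev_add, tape, if_pos ⟨j, b, hj, by simp [ev]⟩]; simp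
  · rw [ev_add, tape, if_neg]
    rintro ⟨j', b', hj', h⟩
    have hb' : b' < 4 := hl b' (List.mem_of_getElem? hj')
    simp only [ev, if_true] at h
    have : j = j' + 1 := by omega
    have : b = b' := by omega
    subst this; subst_vars
    rw [List.getElem?_eq_some_iff] at hj hj'
    obtain ⟨p, hp⟩ := hj
    obtain ⟨p', hp'⟩ := hj'
    exact hc j' p (by rw [hp, hp'])
  · rw [ev_add, tape, if_neg]
    rintro ⟨j', b', hj', h⟩
    have hb' : b' < 4 := hl b' (List.mem_of_getElem? hj')
    simp only [ev, if_true] at h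
    have : j' = j + 1 := by omega
    have : b = b' := by omega
    subst this; subst_vars
    rw [List.getElem?_eq_some_iff] at hj hj'
    obtain ⟨p, hp⟩ := hj
    obtain ⟨p', hp'⟩ := hj'
    exact hc j p' (by rw [hp, hp'])

lemma s_cfg (hn : 2 ≤ n) (hk : 1 ≤ k) (l : List ℕ) (v : V d) :
    s hd c (cfg hd hn hk l v) = cfg hd hn hk l (pos hd c (tape hd hn l) v) := by
  apply Subtype.ext
  apply Prod.ext
  · rfl
  · funext u
    show (if pos hd c (tape hd hn l) u = v then _ else _) = if u = _ then _ else _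
    congr 1
    apply propext
    constructor
    · rintro rfl; rw [pos_invol]
    · rintro rfl; rw [pos_invol]

lemma prod_drop (hn : 2 ≤ n) (hk : 1 ≤ k) (l : List ℕ) (hl : ∀ b ∈ l, b < 4)
    (hc : l.IsChain (· ≠ ·)) (l2 : List ℕ) : ∀ l1 : List ℕ, l = l1 ++ l2 →
    ((l2.map (s (n := n) (k := k) hd)).prod) (cfg hd hn hk l (ev d hd (4 * l.length)))
      = cfg hd hn hk l (ev d hd (4 * l1.length)) := by
  induction l2 with
  | nil => intro l1 h; simp [h]
  | cons b l2 ih =>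
    intro l1 h
    have := ih (l1 ++ [b]) (by simp [h])
    rw [List.map_cons, List.prod_cons, Equiv.Perm.mul_apply, this, s_cfg]
    have ha := tape_act (d := d) hd hn l hl hc l1.length b (by simp [h])
    have hp := pos_back hd b _ _ ha
    rw [ev_add] at hp
    congr 1
    rw [← hp]
    congr 2
    simp; ring

lemma prod_ne_one (hn : 2 ≤ n) (hk : 1 ≤ k) (l : List ℕ) (hl : ∀ b ∈ l, b < 4)
    (hc : l.IsChain (· ≠ ·)) (hne : l ≠ []) :
    (l.map (s (n := n) (k := k) hd)).prod ≠ 1 := by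
  intro h
  have h1 := prod_drop (k := k) hd hn hk l hl hc l [] rfl
  rw [h] at h1
  have h2 := congrFun (congrArg (fun a => a.val.2) h1) (ev d hd 0)
  simp only [cfg, Equiv.Perm.one_apply, List.length_nil, Nat.cast_zero, mul_zero, if_true] at h2
  split_ifs at h2 with h3
  have h4 := congrFun h3 ⟨0, hd⟩
  simp only [ev, if_true] at h4
  have : 0 < l.length := List.length_pos_iff.mpr hne
  omega

end

def exl (p : Fin 2 × Bool) : List ℕ :=
  if p.2 then [2 * p.1.val, 2 * p.1.val + 1] else [2 * p.1.val + 1, 2 * p.1.val]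

lemma exl_lt (w : List (Fin 2 × Bool)) : ∀ b ∈ w.flatMap exl, b < 4 := by
  intro b hb
  rw [List.mem_flatMap] at hb
  obtain ⟨⟨i, e⟩, _, h⟩ := hb
  fin_cases i <;> cases e <;> simp [exl] at h <;> omega

lemma exl_chain (w : List (Fin 2 × Bool)) (h : FreeGroup.IsReduced w) :
    (w.flatMap exl).IsChain (· ≠ ·) := by
  induction w with
  | nil => simp
  | cons p w ih =>
    unfold FreeGroup.IsReduced at *
    have ih' := ih (List.IsChain.tail h)
    rw [List.flatMap_cons, List.isChain_append]
    refine ⟨?_, ih', ?_⟩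
    · obtain ⟨i, e⟩ := p
      cases e <;> simp [exl]
    · cases w with
      | nil => simp
      | cons q w =>
        rw [List.isChain_cons_cons] at h
        have h1 := h.1
        obtain ⟨i, e⟩ := p
        obtain ⟨j, f⟩ := q
        fin_cases i <;> fin_cases j <;> cases e <;> cases f <;> simp [exl] at h1 ⊢

section
variable (d n k : ℕ) (hd : 1 ≤ d) (hn : 2 ≤ n) (hk : 1 ≤ k)

noncomputable def sG (c : ℕ) : RFAgrp d n k :=
  ⟨s hd c, Subgroup.subset_closure (s_mem hd c)⟩

lemma sG_sq (c : ℕ) : sG d n k hd c * sG d n k hd c = 1 := by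
  apply Subtype.ext
  apply Equiv.ext
  intro a
  exact sfun_invol hd c a

noncomputable def phi : FreeGroup (Fin 2) →* RFAgrp d n k :=
  FreeGroup.lift (fun i => sG d n k hd (2 * i.val) * sG d n k hd (2 * i.val + 1))

lemma phi_mk (w : List (Fin 2 × Bool)) :
    phi d n k hd (FreeGroup.mk w) = ((w.flatMap exl).map (sG d n k hd)).prod := by
  have hinv : ∀ c, (sG d n k hd c)⁻¹ = sG d n k hd c := fun c =>
    inv_eq_of_mul_eq_one_left (sG_sq d n k hd c)
  rw [phi, FreeGroup.lift_mk]
  induction w with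
  | nil => simp
  | cons p w ih =>
    rw [List.map_cons, List.prod_cons, ih, List.flatMap_cons, List.map_append, List.prod_append]
    congr 1
    obtain ⟨i, e⟩ := p
    cases e <;> simp [exl, hinv]

include hn hk in
lemma phi_inj : Function.Injective (phi d n k hd) := by
  rw [injective_iff_map_eq_one]
  intro g hg
  by_contra hne
  rw [← FreeGroup.mk_toWord (x := g), phi_mk] at hg
  have h2 := congrArg Subtype.val hg
  have h3 := prod_ne_one (k := k) hd hn hk _ (exl_lt g.toWord)
    (exl_chain _ (FreeGroup.isReduced_toWord)) (by
      intro h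
      apply hne
      rw [← FreeGroup.toWord_eq_nil_iff]
      cases hw : g.toWord with
      | nil => rfl
      | cons p w =>
        rw [hw, List.flatMap_cons] at h
        have := (List.append_eq_nil_iff.mp h).1
        obtain ⟨i, e⟩ := p
        cases e <;> simp [exl] at this)
  apply h3
  rw [← Subgroup.coe_one, ← h2, ← Subgroup.subtype_apply, map_list_prod, List.map_map]
  rfl

end

/-- words starting with a letter -/
def W (p : Fin 2 × Bool) : Set (FreeGroup (Fin 2)) := {g | g.toWord.head? = some p}

lemma W_move (i : Fin 2) (g : FreeGroup (Fin 2)) (h : g ∉ W (i, true)) :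
    (FreeGroup.of i)⁻¹ * g ∈ W (i, false) := by
  have e : ((FreeGroup.of i)⁻¹ * g).toWord = FreeGroup.reduce ((i, false) :: g.toWord) := by
    conv_lhs => rw [← FreeGroup.mk_toWord (x := g)]
    rw [FreeGroup.of, FreeGroup.inv_mk, FreeGroup.mul_mk, FreeGroup.toWord_mk]
    rfl
  simp only [W, Set.mem_setOf_eq] at h ⊢
  rw [e, FreeGroup.reduce.cons, FreeGroup.reduce_toWord]
  cases hw : g.toWord with
  | nil => simp
  | cons q w =>
    rw [hw] at h
    obtain ⟨j, f⟩ := q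
    have : ¬ (i = j ∧ false = !f) := by
      rintro ⟨rfl, hf⟩
      cases f <;> simp at h hf
    simp only [if_neg this]
    simp

lemma free_not_amenable : ¬ IsAmenable (FreeGroup (Fin 2)) := by
  rintro ⟨m, m0, m1, madd, minv⟩
  have mono : ∀ A B, A ⊆ B → m A ≤ m B := by
    intro A B h
    have := madd A (B \ A) Set.disjoint_sdiff_right
    rw [Set.union_diff_cancel h] at this
    linarith [m0 (B \ A)]
  have key : ∀ i, 1 ≤ m (W (i, true)) + m (W (i, false)) := by
    intro i
    have h1 := madd (W (i, true)) (W (i, true))ᶜ disjoint_compl_right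
    rw [Set.union_compl_self, m1] at h1
    have h2 := mono _ (((FreeGroup.of i) * ·) '' W (i, false))
      (show (W (i, true))ᶜ ⊆ _ from fun g hg => ⟨_, W_move i g hg, by simp⟩)
    rw [minv] at h2
    linarith
  have hdis : ∀ p q, p ≠ q → Disjoint (W p) (W q) := by
    intro p q hpq
    rw [Set.disjoint_left]
    intro g hp hq
    exact hpq (Option.some.inj (hp.symm.trans hq))
  have e1 := madd _ _ (hdis (0, true) (0, false) (by decide))
  have e2 := madd _ _ (hdis (1, true) (1, false) (by decide))
  have e3 := madd (W (0, true) ∪ W (0, false)) (W (1, true) ∪ W (1, false)) (by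
    rw [Set.disjoint_union_left, Set.disjoint_union_right, Set.disjoint_union_right]
    exact ⟨⟨hdis _ _ (by decide), hdis _ _ (by decide)⟩,
      hdis _ _ (by decide), hdis _ _ (by decide)⟩)
  have e4 := mono _ _ (Set.subset_univ
    ((W (0, true) ∪ W (0, false)) ∪ (W (1, true) ∪ W (1, false))))
  linarith [key 0, key 1]

lemma amenable_of_inj {H G : Type*} [Group H] [Group G] (φ : H →* G)
    (hφ : Function.Injective φ) (h : IsAmenable G) : IsAmenable H := by
  obtain ⟨m, m0, m1, madd, minv⟩ := h
  -- an equivariant map `G → H`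
  obtain ⟨r, hr⟩ : ∃ r : G → H, ∀ h g, r (φ h * g) = h * r g := by
    let st : Setoid G := QuotientGroup.rightRel φ.range
    have hex : ∀ g : G, ∃ h : H, φ h * (Quotient.out (Quotient.mk st g)) = g := by
      intro g
      have : st (Quotient.out (Quotient.mk st g)) g := Quotient.exact (Quotient.out_eq _)
      rw [QuotientGroup.rightRel_apply] at this
      obtain ⟨h, hh⟩ := this
      exact ⟨h, by rw [hh]; group⟩
    choose r hr using hex
    refine ⟨r, fun h g => ?_⟩
    apply hφ
    have hq : Quotient.mk st (φ h * g) = Quotient.mk st g := by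
      apply Quotient.sound
      show st _ _
      rw [QuotientGroup.rightRel_apply]
      exact ⟨h⁻¹, by simp⟩
    have h1 := hr (φ h * g)
    rw [hq] at h1
    have h2 := hr g
    rw [map_mul]
    apply mul_right_cancel (b := Quotient.out (Quotient.mk st g))
    rw [h1, mul_assoc, h2]
  refine ⟨fun A => m (r ⁻¹' A), fun _ => m0 _, by simpa using m1, ?_, ?_⟩
  · intro A B hAB
    simp only [Set.preimage_union]
    exact madd _ _ (hAB.preimage r)
  · intro h A
    show m _ = m _
    rw [← minv (φ h) (r ⁻¹' A)]
    congr 1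
    ext g
    simp only [Set.mem_preimage, Set.mem_image]
    constructor
    · rintro ⟨a, ha, hag⟩
      refine ⟨φ h⁻¹ * g, ?_, by simp⟩
      rw [hr, ← hag]
      simpa using ha
    · rintro ⟨g', hg', rfl⟩
      exact ⟨r g', hg', (hr _ _).symm⟩

end RFAFree

/-- For `n ≥ 2`, the free group on two generators embeds into `RFA(ℤ^d,n,k)`, hence
into `RTM(ℤ^d,n,k)`; in particular neither group is amenable. -/
theorem freeGroup_embeds_and_not_amenable (d n k : ℕ)
    (hd : 1 ≤ d) (hn : 2 ≤ n) (hk : 1 ≤ k) :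
    (∃ φ : FreeGroup (Fin 2) →* RFAgrp d n k, Function.Injective ⇑φ) ∧
    (∃ φ : FreeGroup (Fin 2) →* RTMgrp d n k, Function.Injective ⇑φ) ∧
    ¬ IsAmenable (RFAgrp d n k) ∧ ¬ IsAmenable (RTMgrp d n k) := by
  have hle : RFAgrp d n k ≤ RTMgrp d n k := Subgroup.closure_mono (fun _ h => h.1)
  have h1 := RFAFree.phi_inj d n k hd hn hk
  have h2 : Function.Injective ((Subgroup.inclusion hle).comp (RFAFree.phi d n k hd)) :=
    (Subgroup.inclusion_injective hle).comp h1
  exact ⟨⟨_, h1⟩, ⟨_, h2⟩,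
    fun h => RFAFree.free_not_amenable (RFAFree.amenable_of_inj _ h1 h),
    fun h => RFAFree.free_not_amenable (RFAFree.amenable_of_inj _ h2 h)⟩
end

section
/- Let n ≥ 2, k ≥ 1, d ≥ 1. The group RFA(ℤ^d,n,k) is residually finite and is not finitely generated. -/
open Function

/-- A group is residually finite if every nontrivial element survives in some
homomorphism to a finite group. -/
def ResiduallyFinite (G : Type*) [Group G] : Prop :=
  ∀ g : G, g ≠ 1 → ∃ (H : Type) (_ : Group H) (_ : Finite H) (φ : G →* H), φ g ≠ 1


namespace RFAaux

/-- configuration with tape `x` and head at `v` in state `q` -/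
def mk {d n k : ℕ} (x : V d → Fin n) (v : V d) (q : Fin k) : X d n k :=
  ⟨(x, fun t => if t = v then some q else none), by
    intro u w hu hw
    simp only at hu hw
    split_ifs at hu hw with h1 h2
    · rw [h1, h2]
    · simp at hw
    · simp at hu
    · simp at hu⟩

lemma mk_inj {d n k : ℕ} {x : V d → Fin n} {v v' : V d} {q q' : Fin k}
    (h : mk x v q = mk x v' q') : v = v' ∧ q = q' := by
  have h2 : (mk x v q).val.2 v = (mk x v' q').val.2 v := by rw [h]
  simp only [mk, if_true] at h2
  split_ifs at h2 with h3
  exact ⟨h3, by simpa using h2⟩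

lemma eq_mk {d n k : ℕ} (c : X d n k) (v : V d) (q : Fin k) (h : c.val.2 v = some q) :
    c = mk c.val.1 v q := by
  apply Subtype.ext
  apply Prod.ext
  · rfl
  · funext t
    simp only [mk]
    split_ifs with h1
    · rw [h1, h]
    · by_contra h3
      exact h1 (c.2 t v (Option.isSome_iff_ne_none.2 h3) (by simp [h]))

lemma cases_mk {d n k : ℕ} (c : X d n k) :
    (∀ v, c.val.2 v = none) ∨ ∃ x v q, c = mk x v q := by
  by_cases h : ∀ v, c.val.2 v = none
  · exact Or.inl h
  · push Not at h
    obtain ⟨v, hv⟩ := h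
    obtain ⟨q, hq⟩ := Option.ne_none_iff_exists'.1 hv
    exact Or.inr ⟨_, v, q, eq_mk c v q hq⟩

/-- the good property -/
def P {d n k : ℕ} (π : Equiv.Perm (X d n k)) : Prop :=
  (∀ c : X d n k, (∀ v, c.val.2 v = none) → π c = c) ∧
  ∀ (x : V d → Fin n) (v : V d) (q : Fin k), ∃ (v' : V d) (q' : Fin k) (F : Finset (V d)),
    ∀ (w : V d) (x' : V d → Fin n), (∀ t ∈ F, x' (t + w) = x t) →
      π (mk x' (v + w) q) = mk x' (v' + w) q'

lemma P_one {d n k : ℕ} : P (1 : Equiv.Perm (X d n k)) :=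
  ⟨fun _ _ => rfl, fun _ v q => ⟨v, q, ∅, fun _ _ _ => rfl⟩⟩

lemma P_mul {d n k : ℕ} {π ρ : Equiv.Perm (X d n k)} (h1 : P π) (h2 : P ρ) : P (π * ρ) := by
  classical
  refine ⟨fun c hc => ?_, fun x v q => ?_⟩
  · rw [Equiv.Perm.mul_apply, h2.1 c hc, h1.1 c hc]
  · obtain ⟨v', q', F, hF⟩ := h2.2 x v q
    obtain ⟨v'', q'', F', hF'⟩ := h1.2 x v' q'
    refine ⟨v'', q'', F ∪ F', fun w x' h => ?_⟩
    rw [Equiv.Perm.mul_apply, hF w x' (fun t ht => h t (Finset.mem_union_left _ ht)),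
      hF' w x' (fun t ht => h t (Finset.mem_union_right _ ht))]

lemma P_of {d n k : ℕ} {π : Equiv.Perm (X d n k)} (h1 : IsTM (⇑π))
    (h2 : ∀ c : X d n k, (π c).val.1 = c.val.1) : P π := by
  classical
  obtain ⟨F, F', f, hloc, hnone, hstep⟩ := h1
  refine ⟨hnone, fun x v q => ?_⟩
  refine ⟨v + (f (fun u => x (u + v)) q).2.2, (f (fun u => x (u + v)) q).2.1,
    F.image (fun t => t + v), fun w x' hx => ?_⟩
  have hl := (hloc (fun u => x' (u + (v + w))) (fun u => x (u + v)) q (by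
    intro t ht
    have := hx (t + v) (Finset.mem_image_of_mem _ ht)
    rw [← this, add_assoc])).2
  have hs := (hstep (mk x' (v + w) q) (v + w) q (by simp [mk])).2
  have e1 : (mk x' (v + w) q).val.1 = x' := rfl
  rw [e1, hl] at hs
  apply Subtype.ext
  apply Prod.ext
  · rw [h2]; rfl
  · funext t
    rw [hs t]
    simp only [mk]
    rw [add_right_comm]

lemma P_mem {d n k : ℕ} {π : Equiv.Perm (X d n k)} (h : π ∈ RFAgrp d n k) : P π := by
  have : P π ∧ P π⁻¹ := by
    induction h using Subgroup.closure_induction with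
    | mem π hπ =>
      refine ⟨P_of hπ.1.1 hπ.2, P_of hπ.1.2 fun c => ?_⟩
      have := hπ.2 (π⁻¹ c)
      have h3 : π (π⁻¹ c) = c := π.apply_symm_apply c
      rw [h3] at this
      exact this.symm
    | one => exact ⟨P_one, by rw [inv_one]; exact P_one⟩
    | mul a b _ _ ha hb => exact ⟨P_mul ha.1 hb.1, by rw [mul_inv_rev]; exact P_mul hb.2 ha.2⟩
    | inv a _ ha => exact ⟨ha.2, by rw [inv_inv]; exact ha.1⟩
  exact this.1

/-- reduction mod `p` -/
def proj (d p : ℕ) : V d →+ (Fin d → ZMod p) := (Int.castAddHom (ZMod p)).compLeft (Fin d)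

lemma proj_surj (d p : ℕ) : Function.Surjective (proj d p) := by
  intro a
  refine ⟨fun i => (ZMod.intCast_surjective (a i)).choose, ?_⟩
  funext i
  exact (ZMod.intCast_surjective (a i)).choose_spec

/-- periodic tape -/
def per {d n p : ℕ} (y : (Fin d → ZMod p) → Fin n) : V d → Fin n := fun t => y (proj d p t)

lemma exists_next {d n k p : ℕ} (y : (Fin d → ZMod p) → Fin n) (g : RFAgrp d n k)
    (v : V d) (q : Fin k) : ∃ r : V d × Fin k, ∀ w, proj d p w = 0 →
      g.1 (mk (per y) (v + w) q) = mk (per y) (r.1 + w) r.2 := by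
  obtain ⟨v', q', F, h⟩ := (P_mem g.2).2 (per y) v q
  exact ⟨(v', q'), fun w hw => h w _ fun t _ => by simp [per, hw]⟩

lemma exists_fun {d n k p : ℕ} (y : (Fin d → ZMod p) → Fin n) (g : RFAgrp d n k)
    (a : (Fin d → ZMod p) × Fin k) : ∃ b : (Fin d → ZMod p) × Fin k,
      ∀ v, proj d p v = a.1 → ∃ v', proj d p v' = b.1 ∧
        g.1 (mk (per y) v a.2) = mk (per y) v' b.2 := by
  obtain ⟨v0, hv0⟩ := proj_surj d p a.1
  obtain ⟨r, hr⟩ := exists_next y g v0 a.2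
  refine ⟨(proj d p r.1, r.2), fun v hv => ?_⟩
  have hw : proj d p (v - v0) = 0 := by rw [map_sub, hv, hv0, sub_self]
  refine ⟨r.1 + (v - v0), by rw [map_add, hw, add_zero], ?_⟩
  have := hr _ hw
  rwa [add_sub_cancel] at this

/-- the induced map on the quotient -/
noncomputable def act {d n k p : ℕ} (y : (Fin d → ZMod p) → Fin n) (g : RFAgrp d n k)
    (a : (Fin d → ZMod p) × Fin k) : (Fin d → ZMod p) × Fin k := (exists_fun y g a).choose

lemma act_spec {d n k p : ℕ} (y : (Fin d → ZMod p) → Fin n) (g : RFAgrp d n k)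
    (v v' : V d) (q q' : Fin k) (h : g.1 (mk (per y) v q) = mk (per y) v' q') :
    act y g (proj d p v, q) = (proj d p v', q') := by
  obtain ⟨v'', h1, h2⟩ := (exists_fun y g (proj d p v, q)).choose_spec v rfl
  simp only [h] at h2
  obtain ⟨h3, h4⟩ := mk_inj h2
  apply Prod.ext
  · rw [h3]; exact h1.symm
  · exact h4.symm

/-- the induced homomorphism -/
noncomputable def phi {d n k p : ℕ} (y : (Fin d → ZMod p) → Fin n) :
    RFAgrp d n k →* Equiv.Perm ((Fin d → ZMod p) × Fin k) :=
  MonoidHom.toHomPerm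
    { toFun := fun g => (act y g : Function.End _)
      map_one' := by
        funext a
        obtain ⟨v0, hv0⟩ := proj_surj d p a.1
        have : a = (proj d p v0, a.2) := by rw [hv0]
        rw [this]
        exact act_spec y 1 _ _ _ _ rfl
      map_mul' := by
        intro g h
        funext a
        obtain ⟨v0, hv0⟩ := proj_surj d p a.1
        have : a = (proj d p v0, a.2) := by rw [hv0]
        rw [this]
        obtain ⟨r, hr⟩ := exists_next y h v0 a.2
        obtain ⟨s, hs⟩ := exists_next y g r.1 r.2
        have hr := hr 0 (map_zero _)
        have hs := hs 0 (map_zero _)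
        simp only [add_zero] at hr hs
        have e1 := act_spec y h _ _ _ _ hr
        have e2 := act_spec y g _ _ _ _ hs
        have e3 := act_spec y (g * h) v0 s.1 a.2 s.2 (by
          rw [Subgroup.coe_mul, Equiv.Perm.mul_apply, hr, hs])
        change act y (g * h) _ = act y g (act y h _)
        rw [e3, e1, e2] }

lemma phi_spec {d n k p : ℕ} (y : (Fin d → ZMod p) → Fin n) (g : RFAgrp d n k)
    (v v' : V d) (q q' : Fin k) (h : g.1 (mk (per y) v q) = mk (per y) v' q') :
    phi y g (proj d p v, q) = (proj d p v', q') := act_spec y g v v' q q' h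

lemma exists_p {d : ℕ} (S : Finset (V d)) : ∃ p : ℕ, 0 < p ∧ Set.InjOn (proj d p) S := by
  classical
  obtain ⟨N, hN⟩ : ∃ N : ℕ, ∀ t ∈ S, ∀ i, (t i).natAbs ≤ N := by
    refine ⟨∑ t ∈ S, ∑ i, (t i).natAbs, fun t ht i => ?_⟩
    calc (t i).natAbs ≤ ∑ i, (t i).natAbs :=
          Finset.single_le_sum (f := fun i => (t i).natAbs) (fun _ _ => Nat.zero_le _) (Finset.mem_univ i)
      _ ≤ _ := Finset.single_le_sum (f := fun t : V d => ∑ i, (t i).natAbs)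
          (fun _ _ => Nat.zero_le _) ht
  refine ⟨2 * N + 1, by omega, fun s hs t ht hst => ?_⟩
  funext i
  have h1 : ((s i : ℤ) : ZMod (2 * N + 1)) = ((t i : ℤ) : ZMod (2 * N + 1)) := congrFun hst i
  rw [ZMod.intCast_eq_intCast_iff_dvd_sub] at h1
  have h2 := hN s hs i
  have h3 := hN t ht i
  have h4 := Int.eq_zero_of_abs_lt_dvd h1 (by push_cast; rw [abs_lt]; omega)
  omega

theorem resfin (n k d : ℕ) : ResiduallyFinite (RFAgrp d n k) := by
  classical
  intro g hg
  have : ∃ c, g.1 c ≠ c := by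
    by_contra! h
    exact hg (Subtype.ext (Equiv.ext h))
  obtain ⟨c, hc⟩ := this
  rcases cases_mk c with h | ⟨x, v, q, rfl⟩
  · exact absurd ((P_mem g.2).1 c h) hc
  obtain ⟨v', q', F, hF⟩ := (P_mem g.2).2 x v q
  obtain ⟨p, hp, hinj⟩ := exists_p (F ∪ {v, v'})
  haveI : NeZero p := ⟨hp.ne'⟩
  let y : (Fin d → ZMod p) → Fin n :=
    fun a => x (Function.invFunOn (proj d p) ((F ∪ {v, v'} : Finset (V d)) : Set (V d)) a)
  have hy : ∀ t ∈ F, per y t = x t := fun t ht => by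
    have := hinj.leftInvOn_invFunOn (Finset.mem_coe.2 (Finset.mem_union_left {v, v'} ht))
    simp only [per, y]
    rw [this]
  refine ⟨Equiv.Perm ((Fin d → ZMod p) × Fin k), inferInstance, inferInstance, phi y, fun h1 => ?_⟩
  have h0 := hF 0 x (by simp)
  have h2 := hF 0 (per y) (by simpa using hy)
  simp only [add_zero] at h0 h2
  have h3 := phi_spec y g v v' q q' h2
  rw [h1] at h3
  simp only [Equiv.Perm.one_apply, Prod.mk.injEq] at h3
  have h4 : v = v' := hinj (by simp) (by simp) h3.1
  exact hc (by rw [h0, ← h4, h3.2])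

/-- the pattern -/
def A {d n : ℕ} (e : V d) (c0 c1 : Fin n) (p : ℕ) (x : V d → Fin n) (v : V d) : Prop :=
  x v = c1 ∧ x (v + e) = c1 ∧ ∀ j : ℤ, 2 ≤ j → j ≤ p → x (v + j • e) = c0

open Classical in
/-- the displacement -/
noncomputable def disp {d n k : ℕ} (e : V d) (c0 c1 : Fin n) (p : ℕ) (q0 : Fin k)
    (x : V d → Fin n) (v : V d) (q : Fin k) : V d :=
  if q = q0 ∧ A e c0 c1 p x v then e else if q = q0 ∧ A e c0 c1 p x (v - e) then -e else 0

lemma A_excl {d n : ℕ} {e : V d} {c0 c1 : Fin n} {p : ℕ} {x : V d → Fin n} {v : V d}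
    (hc : c0 ≠ c1) (hp : 2 ≤ p) (h1 : A e c0 c1 p x v) (h2 : A e c0 c1 p x (v - e)) : False := by
  have := h2.2.2 2 le_rfl (by exact_mod_cast hp)
  rw [two_smul, sub_add_add_cancel] at this
  exact hc (this.symm.trans h1.2.1)

lemma disp_disp {d n k : ℕ} {e : V d} {c0 c1 : Fin n} {p : ℕ} {q0 : Fin k}
    (hc : c0 ≠ c1) (hp : 2 ≤ p) (x : V d → Fin n) (v : V d) (q : Fin k) :
    v + disp e c0 c1 p q0 x v q + disp e c0 c1 p q0 x (v + disp e c0 c1 p q0 x v q) q = v := by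
  by_cases h1 : q = q0 ∧ A e c0 c1 p x v
  · have e1 : disp e c0 c1 p q0 x v q = e := by simp only [disp]; rw [if_pos h1]
    have h3 : A e c0 c1 p x (v + e - e) := by rw [add_sub_cancel_right]; exact h1.2
    have h2 : ¬ (q = q0 ∧ A e c0 c1 p x (v + e)) := fun h => A_excl hc hp h.2 h3
    rw [e1]
    simp only [disp]
    rw [if_neg h2, if_pos ⟨h1.1, h3⟩, add_neg_cancel_right]
  · by_cases h2 : q = q0 ∧ A e c0 c1 p x (v - e)
    · have e1 : disp e c0 c1 p q0 x v q = -e := by simp only [disp]; rw [if_neg h1, if_pos h2]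
      rw [e1]
      simp only [disp]
      rw [← sub_eq_add_neg, if_pos h2, sub_add_cancel]
    · have e1 : disp e c0 c1 p q0 x v q = 0 := by simp only [disp]; rw [if_neg h1, if_neg h2]
      rw [e1, add_zero, e1, add_zero]

lemma disp_shift {d n k : ℕ} {e : V d} {c0 c1 : Fin n} {p : ℕ} {q0 : Fin k}
    (x : V d → Fin n) (v : V d) (q : Fin k) :
    disp e c0 c1 p q0 (fun u => x (u + v)) 0 q = disp e c0 c1 p q0 x v q := by
  have h : ∀ w, A e c0 c1 p (fun u => x (u + v)) w ↔ A e c0 c1 p x (w + v) := fun w => by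
    simp only [A, add_right_comm]
  have h0 := h 0
  have h1 := h (0 - e)
  rw [zero_add] at h0
  rw [show (0 : V d) - e + v = v - e by abel] at h1
  simp only [disp]
  rw [h0, h1]

open Classical in
/-- the machine -/
noncomputable def T {d n k : ℕ} (e : V d) (c0 c1 : Fin n) (p : ℕ) (q0 : Fin k)
    (c : X d n k) : X d n k :=
  if h : ∃ r : V d × Fin k, c.val.2 r.1 = some r.2 then
    mk c.val.1 (h.choose.1 + disp e c0 c1 p q0 c.val.1 h.choose.1 h.choose.2) h.choose.2
  else c

lemma T_mk {d n k : ℕ} (e : V d) (c0 c1 : Fin n) (p : ℕ) (q0 : Fin k)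
    (x : V d → Fin n) (v : V d) (q : Fin k) :
    T e c0 c1 p q0 (mk x v q) = mk x (v + disp e c0 c1 p q0 x v q) q := by
  have h : ∃ r : V d × Fin k, (mk x v q).val.2 r.1 = some r.2 := ⟨(v, q), by simp [mk]⟩
  unfold T
  rw [dif_pos h]
  have h2 := mk_inj (eq_mk _ _ _ h.choose_spec : mk x v q = mk x h.choose.1 h.choose.2)
  rw [← h2.1, ← h2.2]
  rfl

lemma T_none {d n k : ℕ} (e : V d) (c0 c1 : Fin n) (p : ℕ) (q0 : Fin k) (c : X d n k)
    (hc : ∀ v, c.val.2 v = none) : T e c0 c1 p q0 c = c := by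
  unfold T
  rw [dif_neg]
  rintro ⟨r, hr⟩
  rw [hc] at hr
  cases hr

lemma T_T {d n k : ℕ} {e : V d} {c0 c1 : Fin n} {p : ℕ} {q0 : Fin k} (hc : c0 ≠ c1)
    (hp : 2 ≤ p) : Function.Involutive (T e c0 c1 p q0) := by
  intro c
  rcases cases_mk c with h | ⟨x, v, q, rfl⟩
  · rw [T_none _ _ _ _ _ _ h, T_none _ _ _ _ _ _ h]
  · rw [T_mk, T_mk, disp_disp hc hp]

lemma T_tape {d n k : ℕ} (e : V d) (c0 c1 : Fin n) (p : ℕ) (q0 : Fin k) (c : X d n k) :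
    (T e c0 c1 p q0 c).val.1 = c.val.1 := by
  rcases cases_mk c with h | ⟨x, v, q, rfl⟩
  · rw [T_none _ _ _ _ _ _ h]
  · rw [T_mk]; rfl

lemma T_TM {d n k : ℕ} (e : V d) (c0 c1 : Fin n) (p : ℕ) (q0 : Fin k) :
    IsTM (T e c0 c1 p q0) := by
  classical
  refine ⟨(Finset.Icc (-1 : ℤ) (p + 1)).image (fun j => j • e), ∅,
    fun x q => (x, q, disp e c0 c1 p q0 x 0 q), ?_, T_none _ _ _ _ _, ?_⟩
  · intro x x' q h
    refine ⟨by simp, ?_⟩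
    have h' : ∀ j : ℤ, -1 ≤ j → j ≤ p + 1 → x (j • e) = x' (j • e) := fun j h1 h2 =>
      h _ (Finset.mem_image_of_mem _ (Finset.mem_Icc.2 ⟨h1, h2⟩))
    have key : ∀ i : ℤ, -1 ≤ i → i ≤ 0 → (A e c0 c1 p x (i • e) ↔ A e c0 c1 p x' (i • e)) := by
      intro i hi hi'
      have e1 : i • e + e = (i + 1) • e := by rw [add_smul, one_smul]
      simp only [A, e1, ← add_smul]
      rw [h' i hi (by omega), h' (i + 1) (by omega) (by omega)]
      have : ∀ j : ℤ, 2 ≤ j → j ≤ p → x ((i + j) • e) = x' ((i + j) • e) := fun j h1 h2 =>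
        h' _ (by omega) (by omega)
      constructor
      · rintro ⟨h1, h2, h3⟩
        exact ⟨h1, h2, fun j a b => by rw [← this j a b]; exact h3 j a b⟩
      · rintro ⟨h1, h2, h3⟩
        exact ⟨h1, h2, fun j a b => by rw [this j a b]; exact h3 j a b⟩
    have k0 := key 0 (by omega) le_rfl
    have k1 := key (-1) le_rfl (by omega)
    rw [zero_smul] at k0
    rw [neg_smul, one_smul] at k1
    simp only [disp, k0, k1, zero_sub]
  · intro c v q h
    rw [eq_mk c v q h, T_mk]
    refine ⟨fun t => by simp [mk], fun t => ?_⟩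
    simp only [mk, disp_shift]

/-- the group element -/
noncomputable def G {d n k : ℕ} (e : V d) (c0 c1 : Fin n) (p : ℕ) (q0 : Fin k) (hc : c0 ≠ c1)
    (hp : 2 ≤ p) : RFAgrp d n k :=
  ⟨(T_T (e := e) (q0 := q0) hc hp).toPerm, Subgroup.subset_closure
    ⟨⟨T_TM e c0 c1 p q0, T_TM e c0 c1 p q0⟩, T_tape e c0 c1 p q0⟩⟩

open Classical in
/-- the periodic tape with two ones -/
noncomputable def yy {d n : ℕ} (e : V d) (c0 c1 : Fin n) (p : ℕ) (a : Fin d → ZMod p) : Fin n :=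
  if a = 0 ∨ a = proj d p e then c1 else c0

lemma yy_one {d n : ℕ} {e : V d} {c0 c1 : Fin n} {p : ℕ} (hc : c0 ≠ c1) {v : V d} :
    per (yy e c0 c1 p) v = c1 ↔ proj d p v = 0 ∨ proj d p v = proj d p e := by
  simp only [per, yy]
  split_ifs with h
  · simp [h]
  · simp [h, hc]

lemma phi_G {d n k : ℕ} (e : V d) (c0 c1 : Fin n) (p : ℕ) (q0 : Fin k) (hc : c0 ≠ c1)
    (hp : 2 ≤ p) (r : ℕ) (y : (Fin d → ZMod r) → Fin n) (v : V d) (q : Fin k) :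
    phi y (G e c0 c1 p q0 hc hp) (proj d r v, q) =
      (proj d r (v + disp e c0 c1 p q0 (per y) v q), q) :=
  phi_spec _ _ _ _ _ _ (T_mk _ _ _ _ _ _ _ _)

lemma phi_same {d n k : ℕ} (e : V d) (c0 c1 : Fin n) (p : ℕ) (q0 : Fin k) (hc : c0 ≠ c1)
    (hp : 2 ≤ p) : phi (yy e c0 c1 p) (G e c0 c1 p q0 hc hp) = 1 := by
  have hA : ∀ v, ¬ A e c0 c1 p (per (yy e c0 c1 p)) v := by
    rintro v ⟨h1, _, h3⟩
    have h4 := h3 p (by exact_mod_cast hp) le_rfl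
    have : proj d p (v + (p : ℤ) • e) = proj d p v := by
      funext i
      simp [proj]
    simp only [per, this] at h4 h1
    exact hc (h4.symm.trans h1)
  ext1 ⟨a, q⟩
  obtain ⟨v, rfl⟩ := proj_surj d p a
  rw [phi_G]
  simp [disp, hA]

lemma phi_diff {d n k : ℕ} (i0 : Fin d) (c0 c1 : Fin n) (p : ℕ) (q0 : Fin k) (hc : c0 ≠ c1)
    (hp : 2 ≤ p) (r : ℕ) (hr : p < r) :
    phi (yy (Pi.single i0 1) c0 c1 r) (G (Pi.single i0 1) c0 c1 p q0 hc hp) =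
      Equiv.swap (0, q0) (proj d r (Pi.single i0 1), q0) := by
  set e : V d := Pi.single i0 1 with he
  have hje : ∀ j : ℤ, 0 < j → j < r → proj d r (j • e) ≠ 0 := by
    intro j h1 h2 h3
    have h4 := congrFun h3 i0
    have h5 : ((j : ℤ) : ZMod r) = 0 := by simpa [proj, he] using h4
    rw [ZMod.intCast_zmod_eq_zero_iff_dvd] at h5
    exact absurd (Int.le_of_dvd h1 h5) (by omega)
  have he0 : proj d r e ≠ 0 := by
    have := hje 1 (by omega) (by omega)
    rwa [one_smul] at this
  have hA : ∀ v, A e c0 c1 p (per (yy e c0 c1 r)) v ↔ proj d r v = 0 := by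
    intro v
    constructor
    · rintro ⟨h1, h2, _⟩
      rw [yy_one hc] at h1 h2
      rcases h1 with h1 | h1
      · exact h1
      · exfalso
        rw [map_add, h1] at h2
        rcases h2 with h2 | h2
        · apply hje 2 (by omega) (by omega)
          rw [two_smul, map_add, h2]
        · rw [add_eq_left] at h2
          exact he0 h2
    · intro h
      refine ⟨(yy_one hc).2 (Or.inl h), (yy_one hc).2 (Or.inr (by rw [map_add, h, zero_add])), ?_⟩
      intro j h1 h2
      simp only [per, yy]
      rw [if_neg]
      rw [map_add, h, zero_add]
      rintro (h3 | h3)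
      · exact hje j (by omega) (by omega) h3
      · apply hje (j - 1) (by omega) (by omega)
        rw [sub_smul, one_smul, map_sub, h3, sub_self]
  ext1 ⟨a, q⟩
  obtain ⟨v, rfl⟩ := proj_surj d r a
  rw [phi_G]
  simp only [disp, hA]
  by_cases hq : q = q0
  · subst hq
    by_cases h0 : proj d r v = 0
    · simp [h0]
    · by_cases h1 : proj d r v = proj d r e
      · simp [h1, he0]
      · have h2 : ¬ proj d r v - proj d r e = 0 := fun h => h1 (sub_eq_zero.1 h)
        rw [Equiv.swap_apply_of_ne_of_ne]
        · simp [h0, h2]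
        · simp [h0]
        · simp [h1]
  · rw [Equiv.swap_apply_of_ne_of_ne]
    · simp [hq]
    · simp [hq]
    · simp [hq]

lemma finite_hom (H : Type*) [Group H] [Group.FG H] : Finite (H →* ℤˣ) := by
  obtain ⟨S, hS⟩ := Group.fg_def.1 (inferInstance : Group.FG H)
  refine Finite.of_injective (fun (f : H →* ℤˣ) (s : S) => f s.1) fun f g h => ?_
  exact MonoidHom.eq_of_eqOn_dense hS fun s hs => congrFun h ⟨s, hs⟩

theorem notfg (n k d : ℕ) (hn : 2 ≤ n) (hk : 1 ≤ k) (hd : 1 ≤ d) : ¬ (RFAgrp d n k).FG := by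
  classical
  intro hfg
  haveI := (Group.fg_iff_subgroup_fg _).2 hfg
  haveI := finite_hom (RFAgrp d n k)
  let i0 : Fin d := ⟨0, hd⟩
  let q0 : Fin k := ⟨0, hk⟩
  let c0 : Fin n := ⟨0, by omega⟩
  let c1 : Fin n := ⟨1, by omega⟩
  have hc : c0 ≠ c1 := by simp [c0, c1]
  let s : ℕ → (RFAgrp d n k →* ℤˣ) := fun p =>
    haveI : NeZero (p + 2) := ⟨by omega⟩
    (Equiv.Perm.sign (α := (Fin d → ZMod (p + 2)) × Fin k)).comp
      (phi (yy (Pi.single i0 1) c0 c1 (p + 2)))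
  have key : ∀ a b : ℕ, a < b → s a ≠ s b := by
    intro a b hab h
    have h1 := DFunLike.congr_fun h (G (Pi.single i0 1) c0 c1 (a + 2) q0 hc (by omega))
    simp only [s, MonoidHom.comp_apply] at h1
    rw [phi_same, phi_diff i0 c0 c1 (a + 2) q0 hc (by omega) (b + 2) (by omega), map_one,
      Equiv.Perm.sign_swap] at h1
    · exact absurd h1 (by decide)
    · intro h2
      have h3 := congrFun (congrArg Prod.fst h2) i0
      haveI : Fact (1 < b + 2) := ⟨by omega⟩
      simp [proj] at h3
  obtain ⟨a, b, hab, h⟩ := Finite.exists_ne_map_eq_of_infinite s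
  rcases lt_or_gt_of_ne hab with h1 | h1
  · exact key a b h1 h
  · exact key b a h1 h.symm

end RFAaux

/-- For `n ≥ 2`, the group `RFA(ℤ^d,n,k)` is residually finite and not finitely
generated. -/
theorem rfa_residuallyFinite_not_fg (n k d : ℕ) (hn : 2 ≤ n) (hk : 1 ≤ k) (hd : 1 ≤ d) :
    ResiduallyFinite (RFAgrp d n k) ∧ ¬ (RFAgrp d n k).FG := by
  exact ⟨RFAaux.resfin n k d, RFAaux.notfg n k d hn hk hd⟩
end
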